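/- Let a ∈ [0,1]. There exists a constant C > 0, depending only on a and the fixed dyadic cutoffs, such that for every Schwartz function f on ℝ² one has ‖f‖_{L^{2(3+a)}(ℝ²)} ≤ C ‖f‖_{X^{1/2}_0}. -/

import Mathlib

/-!
The estimate is a Strichartz inequality for functions whose Fourier transform lives near the curve
`λ = ω(ξ)`, proved piece by piece in the modulation `λ - ω(ξ)`.

*Trilinear `L⁶` bound.* Let `G` be supported in the strip `ξ > 0`, `|λ - ξ ^ (2 + a)| ≤ M`. Since
`(𝓕 G)³` is the transform of `G ⋆ G ⋆ G`, Plancherel and Cauchy–Schwarz bound `‖𝓕 G‖₆⁶` by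
`K (∫ ξ ^ (-a/3) |G|²)³`, where `K` is the largest weighted measure of the set of ways to write a
point as a sum of three points of the strip. Integrating out the variables `λ` leaves `(2 M)²` times
the weighted measure of the part of a simplex `ξ₁ + ξ₂ + ξ₃ = s` where `∑ ξᵢ ^ (2 + a)` lies in an
interval of length `6 M`. Along rays from the barycentre that sum grows at least like
`(s / 3) ^ a r²`, so polar coordinates give `K = O(M³)`.

*From `L⁶` to `L ^ (2 (3 + a))`.* Put `N = ‖G‖₂²`. The frequencies `ξ ≤ R` contribute at most
`(2 M R N) ^ (1/2)` to `𝓕 G` pointwise, so for `R = t² / (8 M N)` the level `t` can only be exceeded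
because of frequencies above `R`, and Chebyshev's inequality in `L⁶` for that part bounds the level
set. Integrating over `t` and exchanging integrals yields the bound `C (M N) ^ (1/2)` for `𝓕 G` in
`L ^ (2 (3 + a))`. Reflection takes care of negative frequencies.

*Summation.* For a Schwartz function with transform `g`, the piece `χ_j(λ - ω(ξ)) g` lies within
`2 · 2 ^ j` of the curve, so its contribution is at most a constant times the `j`-th term of the
`X`-norm. The triangle inequality for partial sums and Fatou's lemma conclude. The series of the
`X`-norm converges for Schwartz functions, so its value is not the junk value of a divergent sum.
-/

open MeasureTheory Complex

noncomputable section

/-- The dispersive symbol `ω(ξ) = ξ |ξ|^(1+a)`. -/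
def disp (a ξ : ℝ) : ℝ := ξ * |ξ| ^ (1 + a)

/-- Fourier transform on `ℝ`, convention `f̂(ξ) = ∫ e^{ixξ} f(x) dx`. -/
def FT1 (f : ℝ → ℂ) (ξ : ℝ) : ℂ :=
  ∫ x : ℝ, Complex.exp (Complex.I * ((x * ξ : ℝ) : ℂ)) * f x

/-- Spacetime Fourier transform, convention `f̂(ξ,λ) = ∫ e^{i(xξ+tλ)} f(x,t) dx dt`,
for `f : ℝ × ℝ → ℂ` with first coordinate `x` (space) and second `t` (time). -/
def FT2 (f : ℝ × ℝ → ℂ) (ξ lam : ℝ) : ℂ :=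
  ∫ p : ℝ × ℝ, Complex.exp (Complex.I * ((p.1 * ξ + p.2 * lam : ℝ) : ℂ)) * f p

/-- The dyadic cutoffs `χ_j`: `χ_0 = χ₀` and `χ_j(z) = χ(2^{-j} z)` for `j ≥ 1`. -/
def chiJ (χ₀ χ : ℝ → ℝ) (j : ℕ) (z : ℝ) : ℝ :=
  if j = 0 then χ₀ z else χ ((2 : ℝ) ^ (-(j : ℝ)) * z)

/-- Hypotheses on the fixed dyadic cutoffs. -/
structure DyadicCutoffs (χ₀ χ : ℝ → ℝ) : Prop where
  smooth0 : ContDiff ℝ (⊤ : ℕ∞) χ₀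
  even0 : ∀ z, χ₀ (-z) = χ₀ z
  mem0 : ∀ z, χ₀ z ∈ Set.Icc (0 : ℝ) 1
  supp0 : ∀ z, 2 < |z| → χ₀ z = 0
  one0 : ∀ z, |z| ≤ 1 → χ₀ z = 1
  smooth1 : ContDiff ℝ (⊤ : ℕ∞) χ
  even1 : ∀ z, χ (-z) = χ z
  mem1 : ∀ z, χ z ∈ Set.Icc (0 : ℝ) 1
  supp1 : ∀ z, χ z ≠ 0 → 1 / 2 < |z| ∧ |z| < 2
  partition : ∀ z, ∑' j : ℕ, chiJ χ₀ χ j z = 1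

/-- A smooth time cutoff supported in `[-1,1]`. -/
structure TimeCutoff (ψ : ℝ → ℝ) : Prop where
  smooth : ContDiff ℝ (⊤ : ℕ∞) ψ
  supp : ∀ t, ψ t ≠ 0 → |t| ≤ 1

/-- The norm `‖f‖_{X^b_s}`. -/
def Xnorm (a : ℝ) (χ₀ χ : ℝ → ℝ) (b s : ℝ) (f : ℝ × ℝ → ℂ) : ℝ :=
  ∑' j : ℕ, (2 : ℝ) ^ ((j : ℝ) * b) *
    (∫ p : ℝ × ℝ, chiJ χ₀ χ j (p.2 - disp a p.1) * (1 + |p.1|) ^ (2 * s) *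
      ‖FT2 f p.1 p.2‖ ^ 2) ^ ((1 : ℝ) / 2)

/-- The norm `‖f‖_{Y^b_{s₀,s₁}} = ‖x·f‖_{X^b_{s₀}} + ‖t·f‖_{X^b_{s₁}}`. -/
def Ynorm (a : ℝ) (χ₀ χ : ℝ → ℝ) (b s₀ s₁ : ℝ) (f : ℝ × ℝ → ℂ) : ℝ :=
  Xnorm a χ₀ χ b s₀ (fun p => (p.1 : ℂ) * f p) +
    Xnorm a χ₀ χ b s₁ (fun p => (p.2 : ℂ) * f p)

/-- The norm `‖f‖_{Z^b_s} = ‖f‖_{X^b_s} + ‖f‖_{Y^b_{s-2s*,s}}`, where `s* = 1/2 + a/2`. -/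
def Znorm (a : ℝ) (χ₀ χ : ℝ → ℝ) (b s : ℝ) (f : ℝ × ℝ → ℂ) : ℝ :=
  Xnorm a χ₀ χ b s f + Ynorm a χ₀ χ b (s - 2 * (1 / 2 + a / 2)) s f

/-- The norm `‖f‖_{X̃^b_s}`. -/
def XtildeNorm (a b s : ℝ) (f : ℝ × ℝ → ℂ) : ℝ :=
  (∫ p : ℝ × ℝ, (1 + |p.2 - disp a p.1|) ^ (2 * b) * (1 + |p.1|) ^ (2 * s) *
    ‖FT2 f p.1 p.2‖ ^ 2) ^ ((1 : ℝ) / 2)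

/-- The Sobolev norm `‖g‖_{H^s} = (∫ (1+|ξ|)^{2s} |ĝ(ξ)|² dξ)^{1/2}`. -/
def Hnorm (s : ℝ) (g : ℝ → ℂ) : ℝ :=
  (∫ ξ : ℝ, (1 + |ξ|) ^ (2 * s) * ‖FT1 g ξ‖ ^ 2) ^ ((1 : ℝ) / 2)

/-- The weighted norm `‖g‖_{F^s} = ‖g‖_{H^s} + ‖x·g‖_{H^{s-2s*}}` (here `sstar = s*`). -/
def Fnorm (sstar s : ℝ) (g : ℝ → ℂ) : ℝ :=
  Hnorm s g + Hnorm (s - 2 * sstar) (fun x => (x : ℂ) * g x)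

/-- The `L^p` norm `(∫ ‖f‖^p)^{1/p}`. -/
def Lpnorm {α : Type*} [MeasureSpace α] {E : Type*} [NormedAddCommGroup E]
    (p : ℝ) (f : α → E) : ℝ :=
  (∫ x, ‖f x‖ ^ p) ^ (1 / p)

/-- The linear propagator `W(t)`, defined via Fourier inversion so that its Fourier
transform in `x` is `e^{itω(ξ)} û₀(ξ)`. -/
def Wgrp (a : ℝ) (u₀ : ℝ → ℂ) (t x : ℝ) : ℂ :=
  ((1 / (2 * Real.pi) : ℝ) : ℂ) *
    ∫ ξ : ℝ, Complex.exp (-(Complex.I * ((x * ξ : ℝ) : ℂ))) *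
      (Complex.exp (Complex.I * ((t * disp a ξ : ℝ) : ℂ)) * FT1 u₀ ξ)

/-- The Fourier multiplier `D^σ` with symbol `|ξ|^σ`, via Fourier inversion. -/
def Dop (σ : ℝ) (g : ℝ → ℂ) (x : ℝ) : ℂ :=
  ((1 / (2 * Real.pi) : ℝ) : ℂ) *
    ∫ ξ : ℝ, Complex.exp (-(Complex.I * ((x * ξ : ℝ) : ℂ))) *
      (((|ξ| ^ σ : ℝ) : ℂ) * FT1 g ξ)

open scoped ENNReal NNReal FourierTransform SchwartzMap Convolution

section Plancherel

variable {V : Type*} [NormedAddCommGroup V] [InnerProductSpace ℝ V] [FiniteDimensional ℝ V]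
  [MeasurableSpace V] [BorelSpace V]

theorem continuous_fourier_of_integrable {E : Type*} [NormedAddCommGroup E] [NormedSpace ℂ E]
    {f : V → E} (hf : Integrable f) : Continuous (𝓕 f) :=
  VectorFourier.fourierIntegral_continuous Real.continuous_fourierChar continuous_inner hf

variable {E : Type*} [NormedAddCommGroup E] [InnerProductSpace ℂ E] [CompleteSpace E]

/- Both sides have the same integral against every test function, since the Fourier transform is
self-adjoint. -/
theorem fourier_ae_eq_fourier_toLp {f : V → E} (hf : Integrable f) (hf₂ : MemLp f 2) :
    𝓕 f =ᵐ[volume] (𝓕 (hf₂.toLp f) : Lp E 2 (volume : Measure V)) := by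
  refine ae_eq_of_integral_contDiff_smul_eq
    (continuous_fourier_of_integrable hf).locallyIntegrable
    ((Lp.memLp _).locallyIntegrable one_le_two) fun φ hφ hφc ↦ ?_
  have hψc : HasCompactSupport fun x ↦ (φ x : ℂ) := hφc.comp_left Complex.ofReal_zero
  let ψ : 𝓢(V, ℂ) := hψc.toSchwartzMap (Complex.ofRealCLM.contDiff.comp hφ)
  have ψ_smul (x : V) (v : E) : ψ x • v = φ x • v := Complex.coe_smul (φ x) v
  calc ∫ x, φ x • 𝓕 f x
      = ∫ x, ψ x • 𝓕 f x := by simp only [ψ_smul]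
    _ = ∫ x, 𝓕 (⇑ψ) x • f x := by
        simpa using! (VectorFourier.integral_fourierIntegral_smul_eq_flip (L := innerₗ V)
          Real.continuous_fourierChar continuous_inner ψ.integrable hf).symm
    _ = ∫ x, 𝓕 ψ x • hf₂.toLp f x := by
        refine integral_congr_ae ?_
        filter_upwards [hf₂.coeFn_toLp] with x hx
        rw [hx, SchwartzMap.fourier_coe]
    _ = ∫ x, ψ x • (𝓕 (hf₂.toLp f) : Lp E 2 (volume : Measure V)) x := by
        simpa [TemperedDistribution.fourier_apply, Lp.toTemperedDistribution_apply] using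
          DFunLike.congr_fun (Lp.fourier_toTemperedDistribution_eq (hf₂.toLp f)) ψ
    _ = ∫ x, φ x • (𝓕 (hf₂.toLp f) : Lp E 2 (volume : Measure V)) x := by
        simp only [ψ_smul]

theorem eLpNorm_two_fourier {f : V → E} (hf : Integrable f) (hf₂ : MemLp f 2) :
    eLpNorm (𝓕 f) 2 = eLpNorm f 2 := by
  rw [eLpNorm_congr_ae (fourier_ae_eq_fourier_toLp hf hf₂), ← Lp.enorm_def, ← Lp.enorm_toLp hf₂,
    ← ofReal_norm, ← ofReal_norm, Lp.norm_fourier_eq]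

theorem lintegral_enorm_sq_fourier_le {f : V → E} (hf : Integrable f) :
    ∫⁻ x, ‖𝓕 f x‖ₑ ^ 2 ≤ ∫⁻ x, ‖f x‖ₑ ^ 2 := by
  have eLpNorm_sq (g : V → E) : ∫⁻ x, ‖g x‖ₑ ^ 2 = eLpNorm g 2 ^ 2 := by
    simpa using (eLpNorm_nnreal_pow_eq_lintegral (f := g) (p := 2) two_ne_zero).symm
  by_cases hf₂ : eLpNorm f 2 = ⊤
  · simp [eLpNorm_sq, hf₂]
  · rw [eLpNorm_sq, eLpNorm_sq, eLpNorm_two_fourier hf ⟨hf.1, lt_top_iff_ne_top.2 hf₂⟩]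

end Plancherel

section Convolution

theorem lintegral_sq_le_of_sq_le_mul {X : Type*} [MeasurableSpace X] {μ : Measure X}
    {f α β : X → ℝ≥0∞} (hα : Measurable α) (hβ : Measurable β)
    (h : ∀ x, f x ^ 2 ≤ α x * β x) :
    (∫⁻ x, f x ∂μ) ^ 2 ≤ (∫⁻ x, α x ∂μ) * ∫⁻ x, β x ∂μ := by
  have le_sqrt (x : X) : f x ≤ α x ^ (1 / 2 : ℝ) * β x ^ (1 / 2 : ℝ) := by
    rw [← ENNReal.mul_rpow_of_nonneg _ _ one_half_pos.le, one_div,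
      ENNReal.le_rpow_inv_iff two_pos]
    exact_mod_cast h x
  have hölder := (lintegral_mono le_sqrt).trans (ENNReal.lintegral_mul_norm_pow_le (μ := μ)
    hα.aemeasurable hβ.aemeasurable one_half_pos.le one_half_pos.le (add_halves 1))
  rw [← ENNReal.mul_rpow_of_nonneg _ _ one_half_pos.le, one_div,
    ENNReal.le_rpow_inv_iff two_pos] at hölder
  exact_mod_cast hölder

section Group

variable {G : Type*} [AddGroup G] [MeasurableSpace G] [MeasurableAdd₂ G] [MeasurableNeg G]
  {μ : Measure G}

theorem lconvolution_sq_le_of_sq_le_mul {f g α β γ δ : G → ℝ≥0∞}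
    (hα : Measurable α) (hβ : Measurable β) (hγ : Measurable γ) (hδ : Measurable δ)
    (hf : ∀ x, f x ^ 2 ≤ α x * β x) (hg : ∀ x, g x ^ 2 ≤ γ x * δ x) (x : G) :
    (f ⋆ₗ[μ] g) x ^ 2 ≤ (α ⋆ₗ[μ] γ) x * (β ⋆ₗ[μ] δ) x := by
  refine lintegral_sq_le_of_sq_le_mul (by fun_prop) (by fun_prop) fun y ↦ ?_
  rw [mul_pow, mul_mul_mul_comm]
  exact mul_le_mul' (hf y) (hg _)

theorem lintegral_lconvolution [SFinite μ] [μ.IsAddLeftInvariant] {f g : G → ℝ≥0∞}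
    (hf : Measurable f) (hg : Measurable g) :
    ∫⁻ x, (f ⋆ₗ[μ] g) x ∂μ = (∫⁻ x, f x ∂μ) * ∫⁻ x, g x ∂μ := by
  simp only [lconvolution_def]
  rw [lintegral_lintegral_swap (by fun_prop), ← lintegral_mul_const _ hf]
  refine lintegral_congr fun y ↦ ?_
  rw [lintegral_const_mul _ (by fun_prop), lintegral_add_left_eq_self]

end Group

theorem lconvolution_mono {G : Type*} [Add G] [Neg G] [MeasurableSpace G] {μ : Measure G}
    {f₁ f₂ g₁ g₂ : G → ℝ≥0∞} (hf : f₁ ≤ f₂) (hg : g₁ ≤ g₂) :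
    f₁ ⋆ₗ[μ] g₁ ≤ f₂ ⋆ₗ[μ] g₂ :=
  fun _ ↦ lintegral_mono fun _ ↦ mul_le_mul' (hf _) (hg _)

theorem enorm_convolution_mul_le {G 𝕜 : Type*} [AddCommGroup G] [MeasurableSpace G]
    {μ : Measure G} [NontriviallyNormedField 𝕜] [NormedSpace ℝ 𝕜]
    (f g : G → 𝕜) (x : G) :
    ‖(f ⋆[ContinuousLinearMap.mul 𝕜 𝕜, μ] g) x‖ₑ ≤ ((‖f ·‖ₑ) ⋆ₗ[μ] (‖g ·‖ₑ)) x := by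
  refine (enorm_integral_le_lintegral_enorm _).trans_eq (lintegral_congr fun y ↦ ?_)
  rw [ContinuousLinearMap.mul_apply', enorm_mul, neg_add_eq_sub]

variable {V : Type*} [NormedAddCommGroup V] [InnerProductSpace ℝ V] [FiniteDimensional ℝ V]
  [MeasurableSpace V] [BorelSpace V]

/- `(𝓕 G)³` is the transform of `G ⋆ G ⋆ G`, whose square is at most `K * (β ⋆ β ⋆ β)`. -/
theorem lintegral_enorm_fourier_pow_six_le {G : V → ℂ} {α β : V → ℝ≥0∞} {K : ℝ≥0∞}
    (hG : Integrable G) (hα : Measurable α) (hβ : Measurable β)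
    (hGαβ : ∀ x, ‖G x‖ₑ ^ 2 ≤ α x * β x) (hK : ∀ x, (α ⋆ₗ (α ⋆ₗ α)) x ≤ K) :
    ∫⁻ x, ‖𝓕 G x‖ₑ ^ 6 ≤ K * (∫⁻ x, β x) ^ 3 := by
  let H : V → ℂ := G ⋆[ContinuousLinearMap.mul ℂ ℂ] G
  let T : V → ℂ := G ⋆[ContinuousLinearMap.mul ℂ ℂ] H
  have hH : Integrable H := hG.integrable_convolution _ hG
  have hT : Integrable T := hG.integrable_convolution _ hH
  have fourier_T (x : V) : 𝓕 T x = 𝓕 G x ^ 3 := by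
    rw [Real.fourier_mul_convolution_eq hG hH, Real.fourier_mul_convolution_eq hG hG]
    ring
  have T_sq_le (x : V) : ‖T x‖ₑ ^ 2 ≤ K * (β ⋆ₗ (β ⋆ₗ β)) x :=
    calc ‖T x‖ₑ ^ 2
        ≤ ((‖G ·‖ₑ) ⋆ₗ ((‖G ·‖ₑ) ⋆ₗ (‖G ·‖ₑ))) x ^ 2 := by
          gcongr
          exact (enorm_convolution_mul_le _ _ x).trans
            (lconvolution_mono le_rfl (fun y ↦ enorm_convolution_mul_le G G y) x)
      _ ≤ (α ⋆ₗ (α ⋆ₗ α)) x * (β ⋆ₗ (β ⋆ₗ β)) x :=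
          lconvolution_sq_le_of_sq_le_mul hα hβ (by fun_prop) (by fun_prop) hGαβ
            (lconvolution_sq_le_of_sq_le_mul hα hβ hα hβ hGαβ hGαβ) x
      _ ≤ K * (β ⋆ₗ (β ⋆ₗ β)) x := by
          gcongr
          exact hK x
  calc ∫⁻ x, ‖𝓕 G x‖ₑ ^ 6
      = ∫⁻ x, ‖𝓕 T x‖ₑ ^ 2 := by simp only [fourier_T, enorm_pow, ← pow_mul]
    _ ≤ ∫⁻ x, ‖T x‖ₑ ^ 2 := lintegral_enorm_sq_fourier_le hT
    _ ≤ ∫⁻ x, K * (β ⋆ₗ (β ⋆ₗ β)) x := lintegral_mono T_sq_le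
    _ = K * (∫⁻ x, β x) ^ 3 := by
      rw [lintegral_const_mul _ (by fun_prop), lintegral_lconvolution hβ (by fun_prop),
        lintegral_lconvolution hβ hβ]
      ring

end Convolution

section Interpolation

theorem setLIntegral_Ioc_rpow_sub_one {r T : ℝ} (hr : 0 < r) (hT : 0 ≤ T) :
    ∫⁻ t in Set.Ioc 0 T, ENNReal.ofReal (t ^ (r - 1)) = ENNReal.ofReal (T ^ r / r) := by
  have h : -1 < r - 1 := by linarith
  rw [← ofReal_integral_eq_lintegral_ofReal, ← intervalIntegral.integral_of_le hT,
    integral_rpow (Or.inl h), sub_add_cancel, Real.zero_rpow hr.ne', sub_zero]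
  · exact (intervalIntegrable_iff_integrableOn_Ioc_of_le hT).1
      (intervalIntegral.intervalIntegrable_rpow' h)
  · filter_upwards [ae_restrict_mem measurableSet_Ioc] with t ht
    exact Real.rpow_nonneg ht.1.le _

variable {X Y : Type*} [MeasurableSpace X] [MeasurableSpace Y] {μ : Measure X} {ν : Measure Y}
  {ρ : Y → ℝ} {β D R : ℝ}

/-- The moment of order `-β` of a size function `ρ`, restricted to the region where `ρ` exceeds
`R`. It records the contribution of the high frequencies to the level sets of a function. -/
def tailMoment (ρ : Y → ℝ) (ν : Measure Y) (β R : ℝ) : ℝ≥0∞ :=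
  ∫⁻ y in {y | R < ρ y}, ENNReal.ofReal (ρ y ^ (-β)) ∂ν

theorem tailMoment_le (hρ : Measurable ρ) (hβ : 0 ≤ β) (hR : 0 < R) :
    tailMoment ρ ν β R ≤ ENNReal.ofReal (R ^ (-β)) * ν Set.univ :=
  calc tailMoment ρ ν β R
      ≤ ∫⁻ _ in {y | R < ρ y}, ENNReal.ofReal (R ^ (-β)) ∂ν :=
        setLIntegral_mono' (measurableSet_lt measurable_const hρ) fun _ hy ↦
          ENNReal.ofReal_le_ofReal (Real.rpow_le_rpow_of_nonpos hR hy.le (neg_nonpos.2 hβ))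
    _ ≤ ENNReal.ofReal (R ^ (-β)) * ν Set.univ := by
        rw [setLIntegral_const]
        gcongr
        exact Set.subset_univ _

theorem lintegral_rpow_mul_tailMoment_le [SFinite ν] (hρ : Measurable ρ) (hρ₀ : ∀ᵐ y ∂ν, 0 < ρ y)
    (hβ : 0 < β) (hD : 0 < D) :
    ∫⁻ t in Set.Ioi (0 : ℝ), ENNReal.ofReal (t ^ (2 * β - 1)) * tailMoment ρ ν β (t ^ 2 / D) ≤
      ENNReal.ofReal (D ^ β / (2 * β)) * ν Set.univ := by
  let F (t : ℝ) (y : Y) : ℝ≥0∞ := {y | t ^ 2 / D < ρ y}.indicator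
    (fun y ↦ ENNReal.ofReal (t ^ (2 * β - 1)) * ENNReal.ofReal (ρ y ^ (-β))) y
  have hF : Measurable (Function.uncurry F) :=
    Measurable.indicator (f := fun p : ℝ × Y ↦
        ENNReal.ofReal (p.1 ^ (2 * β - 1)) * ENNReal.ofReal (ρ p.2 ^ (-β))) (by fun_prop)
      (measurableSet_lt (f := fun p : ℝ × Y ↦ p.1 ^ 2 / D) (g := fun p ↦ ρ p.2)
        (by fun_prop) (by fun_prop))
  have inner_le {y : Y} (hy : 0 < ρ y) :
      ∫⁻ t in Set.Ioi (0 : ℝ), F t y ≤ ENNReal.ofReal (D ^ β / (2 * β)) := by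
    have mem_Ioc {t : ℝ} (ht : 0 < t) (h : t ^ 2 / D < ρ y) : t ∈ Set.Ioc 0 √(D * ρ y) :=
      ⟨ht, Real.le_sqrt_of_sq_le (by rw [div_lt_iff₀' hD] at h; exact h.le)⟩
    calc ∫⁻ t in Set.Ioi (0 : ℝ), F t y
        ≤ ∫⁻ t, (Set.Ioc 0 √(D * ρ y)).indicator
            (fun t ↦ ENNReal.ofReal (t ^ (2 * β - 1)) * ENNReal.ofReal (ρ y ^ (-β))) t := by
          refine (setLIntegral_mono' measurableSet_Ioi fun t ht ↦ ?_).trans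
            (setLIntegral_le_lintegral _ _)
          by_cases h : t ^ 2 / D < ρ y
          · simp [F, h, mem_Ioc ht h]
          · simp [F, h]
      _ = ENNReal.ofReal (√(D * ρ y) ^ (2 * β) / (2 * β)) * ENNReal.ofReal (ρ y ^ (-β)) := by
          rw [lintegral_indicator measurableSet_Ioc, lintegral_mul_const' _ _ ENNReal.ofReal_ne_top,
            setLIntegral_Ioc_rpow_sub_one (by positivity) (Real.sqrt_nonneg _)]
      _ = ENNReal.ofReal (D ^ β / (2 * β)) := by
          rw [← ENNReal.ofReal_mul (by positivity), Real.rpow_mul (Real.sqrt_nonneg _),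
            Real.rpow_two, Real.sq_sqrt (by positivity), Real.mul_rpow hD.le hy.le,
            Real.rpow_neg hy.le]
          have := (Real.rpow_pos_of_pos hy β).ne'
          congr 1
          field_simp
  calc ∫⁻ t in Set.Ioi (0 : ℝ), ENNReal.ofReal (t ^ (2 * β - 1)) * tailMoment ρ ν β (t ^ 2 / D)
      = ∫⁻ t in Set.Ioi (0 : ℝ), ∫⁻ y, F t y ∂ν := by
        refine lintegral_congr fun t ↦ ?_
        rw [tailMoment, ← lintegral_const_mul' _ _ ENNReal.ofReal_ne_top,
          lintegral_indicator (measurableSet_lt measurable_const hρ)]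
    _ = ∫⁻ y, (∫⁻ t in Set.Ioi (0 : ℝ), F t y) ∂ν := lintegral_lintegral_swap hF.aemeasurable
    _ ≤ ∫⁻ _, ENNReal.ofReal (D ^ β / (2 * β)) ∂ν :=
        lintegral_mono_ae (hρ₀.mono fun y ↦ inner_le)
    _ = ENNReal.ofReal (D ^ β / (2 * β)) * ν Set.univ := lintegral_const _

/- All but one of the factors `tailMoment` are estimated by `tailMoment_le`. -/
theorem rpow_mul_le_tailMoment (k : ℕ) {t : ℝ} {m B : ℝ≥0∞} (hρ : Measurable ρ) (hβ : 0 ≤ β)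
    (hD : 0 < D) (ht : 0 < t)
    (h : ENNReal.ofReal (t ^ (2 * (k + 1))) * m ≤ B * tailMoment ρ ν β (t ^ 2 / D) ^ (k + 1)) :
    ENNReal.ofReal (t ^ (2 * (k + 1) * (1 + β) - 1)) * m ≤
      B * ν Set.univ ^ k * ENNReal.ofReal (D ^ (β * k)) *
        (ENNReal.ofReal (t ^ (2 * β - 1)) * tailMoment ρ ν β (t ^ 2 / D)) := by
  have tailMoment_pow_le :=
    pow_le_pow_left' (tailMoment_le (ν := ν) (R := t ^ 2 / D) hρ hβ (by positivity)) k
  set I := tailMoment ρ ν β (t ^ 2 / D)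
  set N := ν Set.univ
  have split_exponent : t ^ (2 * (k + 1) * (1 + β) - 1) =
      t ^ (2 * (k + 1)) * (t ^ 2) ^ (β * k) * t ^ (2 * β - 1) := by
    rw [← Real.rpow_two, ← Real.rpow_natCast t, ← Real.rpow_mul ht.le, ← Real.rpow_add ht,
      ← Real.rpow_add ht]
    congr 1
    push_cast
    ring
  have cancel_t : ((t ^ 2 / D) ^ (-β)) ^ k * (t ^ 2) ^ (β * k) = D ^ (β * k) := by
    rw [Real.rpow_neg (by positivity), inv_pow, ← Real.rpow_mul_natCast (by positivity),
      Real.div_rpow (by positivity) hD.le]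
    have := (Real.rpow_pos_of_pos (pow_pos ht 2) (β * k)).ne'
    field_simp
  calc ENNReal.ofReal (t ^ (2 * (k + 1) * (1 + β) - 1)) * m
      = ENNReal.ofReal (t ^ (2 * (k + 1))) * m * ENNReal.ofReal ((t ^ 2) ^ (β * k)) *
          ENNReal.ofReal (t ^ (2 * β - 1)) := by
        rw [split_exponent, ENNReal.ofReal_mul (by positivity), ENNReal.ofReal_mul (by positivity)]
        ring
    _ ≤ B * ((ENNReal.ofReal ((t ^ 2 / D) ^ (-β)) * N) ^ k * I) *
          ENNReal.ofReal ((t ^ 2) ^ (β * k)) * ENNReal.ofReal (t ^ (2 * β - 1)) := by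
        grw [h, pow_succ, tailMoment_pow_le]
    _ = B * N ^ k * ENNReal.ofReal (((t ^ 2 / D) ^ (-β)) ^ k * (t ^ 2) ^ (β * k)) *
          (ENNReal.ofReal (t ^ (2 * β - 1)) * I) := by
        rw [ENNReal.ofReal_mul (by positivity), ENNReal.ofReal_pow (by positivity)]
        ring
    _ = _ := by rw [cancel_t]

theorem lintegral_rpow_le_of_meas_lt_le_tailMoment [IsFiniteMeasure ν] {u : X → ℝ} {B : ℝ≥0}
    (k : ℕ) (hu : AEMeasurable u μ) (hu₀ : ∀ x, 0 ≤ u x) (hρ : Measurable ρ)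
    (hρ₀ : ∀ᵐ y ∂ν, 0 < ρ y) (hβ : 0 < β) (hD : 0 < D)
    (h : ∀ t : ℝ, 0 < t → ENNReal.ofReal (t ^ (2 * (k + 1))) * μ {x | t < u x} ≤
      B * tailMoment ρ ν β (t ^ 2 / D) ^ (k + 1)) :
    ∫⁻ x, ENNReal.ofReal (u x ^ (2 * (k + 1) * (1 + β))) ∂μ ≤
      ENNReal.ofReal ((k + 1) * (1 + β) / β * D ^ (β * (k + 1))) * B * ν Set.univ ^ (k + 1) := by
  set q : ℝ := 2 * (k + 1) * (1 + β) with hq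
  set N := ν Set.univ
  calc ∫⁻ x, ENNReal.ofReal (u x ^ q) ∂μ
      = ENNReal.ofReal q * ∫⁻ t in Set.Ioi 0, ENNReal.ofReal (t ^ (q - 1)) * μ {x | t < u x} := by
        simp only [mul_comm (ENNReal.ofReal (_ ^ (q - 1)))]
        exact lintegral_rpow_eq_lintegral_meas_lt_mul μ (ae_of_all _ hu₀) hu (by positivity)
    _ ≤ ENNReal.ofReal q * (B * N ^ k * ENNReal.ofReal (D ^ (β * k)) *
          (ENNReal.ofReal (D ^ β / (2 * β)) * N)) := by
        grw [setLIntegral_mono' measurableSet_Ioi fun t ht ↦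
            rpow_mul_le_tailMoment k hρ hβ.le hD ht (h t ht),
          lintegral_const_mul' _ _ (by finiteness),
          lintegral_rpow_mul_tailMoment_le hρ hρ₀ hβ hD]
    _ = ENNReal.ofReal (q * (D ^ (β * k) * (D ^ β / (2 * β)))) * B * N ^ (k + 1) := by
        rw [ENNReal.ofReal_mul (p := q) (by positivity),
          ENNReal.ofReal_mul (p := D ^ (β * k)) (by positivity)]
        ring
    _ = _ := by
        rw [mul_add_one β, Real.rpow_add hD, hq]
        congr 3
        field_simp

end Interpolation

section SimplexShell

theorem setLIntegral_ofReal_le_of_sq_sub_sq_le {S : Set ℝ} {L : ℝ} (hS : MeasurableSet S)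
    (hS₀ : S ⊆ Set.Ioi 0) (h : ∀ r₁ ∈ S, ∀ r₂ ∈ S, r₁ ≤ r₂ → r₂ ^ 2 - r₁ ^ 2 ≤ L) :
    ∫⁻ r in S, ENNReal.ofReal r ≤ ENNReal.ofReal (L / 2) := by
  have injOn_sq : Set.InjOn (fun r : ℝ ↦ r ^ 2) S := fun r₁ h₁ r₂ h₂ ↦
    (pow_left_inj₀ (hS₀ h₁).le (hS₀ h₂).le two_ne_zero).1
  have diam_le : Metric.ediam ((fun r : ℝ ↦ r ^ 2) '' S) ≤ ENNReal.ofReal L := by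
    refine Metric.ediam_le ?_
    rintro _ ⟨r₁, h₁, rfl⟩ _ ⟨r₂, h₂, rfl⟩
    rw [edist_dist, Real.dist_eq]
    refine ENNReal.ofReal_le_ofReal ?_
    rcases le_total r₁ r₂ with h₁₂ | h₂₁
    · rw [abs_sub_comm, abs_of_nonneg (sub_nonneg.2 (pow_le_pow_left₀ (hS₀ h₁).le h₁₂ 2))]
      exact h r₁ h₁ r₂ h₂ h₁₂
    · rw [abs_of_nonneg (sub_nonneg.2 (pow_le_pow_left₀ (hS₀ h₂).le h₂₁ 2))]
      exact h r₂ h₂ r₁ h₁ h₂₁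
  calc ∫⁻ r in S, ENNReal.ofReal r
      = ∫⁻ r in S, ENNReal.ofReal |2 * r| * ENNReal.ofReal (1 / 2) := by
        refine setLIntegral_congr_fun hS fun r hr ↦ ?_
        have : 0 < r := hS₀ hr
        rw [← ENNReal.ofReal_mul (abs_nonneg _), abs_of_pos (by positivity)]
        ring_nf
    _ = ∫⁻ _ in (fun r : ℝ ↦ r ^ 2) '' S, ENNReal.ofReal (1 / 2) := by
        refine (lintegral_image_eq_lintegral_abs_deriv_mul (f' := (2 * ·)) hS (fun r _ ↦ ?_)
          injOn_sq fun _ ↦ ENNReal.ofReal (1 / 2)).symm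
        simpa using (hasDerivAt_pow 2 r).hasDerivWithinAt
    _ ≤ ENNReal.ofReal (1 / 2) * ENNReal.ofReal L := by
        rw [setLIntegral_const]
        gcongr
        exact (Real.volume_le_diam _).trans diam_le
    _ = ENNReal.ofReal (L / 2) := by
        rw [← ENNReal.ofReal_mul one_half_pos.le]
        ring_nf

theorem volume_le_of_sq_sub_sq_le_on_rays {T : Set (ℝ × ℝ)} {L : ℝ} (hT : MeasurableSet T)
    (P : ℝ × ℝ) (h : ∀ θ r₁ r₂ : ℝ, 0 < r₁ → r₁ ≤ r₂ →
      P + (r₁ * Real.cos θ, r₁ * Real.sin θ) ∈ T → P + (r₂ * Real.cos θ, r₂ * Real.sin θ) ∈ T →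
        r₂ ^ 2 - r₁ ^ 2 ≤ L) :
    volume T ≤ ENNReal.ofReal (Real.pi * L) := by
  let S (θ : ℝ) : Set ℝ := {r | 0 < r ∧ P + (r * Real.cos θ, r * Real.sin θ) ∈ T}
  have measurableSet_S (θ : ℝ) : MeasurableSet (S θ) :=
    measurableSet_Ioi.inter (hT.preimage (by fun_prop))
  calc volume T
      = ∫⁻ p in polarCoord.target,
          ENNReal.ofReal p.1 * T.indicator 1 (P + (p.1 * Real.cos p.2, p.1 * Real.sin p.2)) := by
        rw [← lintegral_indicator_one hT, ← lintegral_add_left_eq_self _ P,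
          ← lintegral_comp_polarCoord_symm]
        rfl
    _ = ∫⁻ θ in Set.Ioo (-Real.pi) Real.pi, ∫⁻ r in Set.Ioi (0 : ℝ),
          ENNReal.ofReal r * T.indicator 1 (P + (r * Real.cos θ, r * Real.sin θ)) := by
        rw [polarCoord_target, Measure.volume_eq_prod, ← Measure.prod_restrict,
          lintegral_prod_symm']
        exact Measurable.mul (by fun_prop) ((measurable_one.indicator hT).comp (by fun_prop))
    _ = ∫⁻ θ in Set.Ioo (-Real.pi) Real.pi, ∫⁻ r in S θ, ENNReal.ofReal r := by
        refine lintegral_congr fun θ ↦ ?_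
        rw [← lintegral_indicator measurableSet_Ioi, ← lintegral_indicator (measurableSet_S θ)]
        refine lintegral_congr fun r ↦ ?_
        by_cases hr : 0 < r <;>
          by_cases hrT : P + (r * Real.cos θ, r * Real.sin θ) ∈ T <;>
          simp [S, hr, hrT]
    _ ≤ ∫⁻ _ in Set.Ioo (-Real.pi) Real.pi, ENNReal.ofReal (L / 2) :=
        lintegral_mono fun θ ↦ setLIntegral_ofReal_le_of_sq_sub_sq_le (measurableSet_S θ)
          (fun _ hr ↦ hr.1) fun r₁ h₁ r₂ h₂ h₁₂ ↦ h θ r₁ r₂ h₁.1 h₁₂ h₁.2 h₂.2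
    _ = ENNReal.ofReal (Real.pi * L) := by
        rw [setLIntegral_const, Real.volume_Ioo, sub_neg_eq_add,
          ← ENNReal.ofReal_mul' (by positivity)]
        ring_nf

variable {a y : ℝ}

/-- The difference between `x ^ (2 + a)` and the multiple of `x ^ 2` that has the same derivative
at `y`. On `[0, ∞)` it decreases up to `y` and increases from there on. -/
def rpowSubSq (a y x : ℝ) : ℝ := x ^ (2 + a) - (2 + a) / 2 * y ^ a * x ^ 2

theorem hasDerivAt_rpowSubSq (a y : ℝ) {x : ℝ} (hx : 0 < x) :
    HasDerivAt (rpowSubSq a y) ((2 + a) * x * (x ^ a - y ^ a)) x := by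
  refine ((Real.hasDerivAt_rpow_const (p := 2 + a) (Or.inl hx.ne')).sub
    ((hasDerivAt_pow 2 x).const_mul ((2 + a) / 2 * y ^ a))).congr_deriv ?_
  rw [show 2 + a - 1 = 1 + a by ring, Real.rpow_add hx, Real.rpow_one]
  ring

theorem continuous_rpowSubSq (ha : 0 ≤ a) : Continuous (rpowSubSq a y) := by
  have := Real.continuous_rpow_const (q := 2 + a) (by positivity)
  unfold rpowSubSq
  fun_prop

theorem monotoneOn_rpowSubSq (ha : 0 ≤ a) (hy : 0 ≤ y) :
    MonotoneOn (rpowSubSq a y) (Set.Ici y) := by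
  refine monotoneOn_of_hasDerivWithinAt_nonneg (convex_Ici y)
    (continuous_rpowSubSq ha).continuousOn (fun x hx ↦ (hasDerivAt_rpowSubSq a y
      (hy.trans_lt (interior_Ici.subset hx))).hasDerivWithinAt) fun x hx ↦ ?_
  have hyx : y < x := interior_Ici.subset hx
  have : 0 < x := hy.trans_lt hyx
  exact mul_nonneg (by positivity) (sub_nonneg.2 (Real.rpow_le_rpow hy hyx.le ha))

theorem antitoneOn_rpowSubSq (ha : 0 ≤ a) : AntitoneOn (rpowSubSq a y) (Set.Icc 0 y) := by
  refine antitoneOn_of_hasDerivWithinAt_nonpos (convex_Icc 0 y)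
    (continuous_rpowSubSq ha).continuousOn (fun x hx ↦ (hasDerivAt_rpowSubSq a y
      (interior_Icc.subset hx).1).hasDerivWithinAt) fun x hx ↦ ?_
  obtain ⟨hx, hxy⟩ := interior_Icc.subset hx
  exact mul_nonpos_of_nonneg_of_nonpos (by positivity)
    (sub_nonpos.2 (Real.rpow_le_rpow hx.le hxy.le ha))

theorem rpowSubSq_le_on_ray {e r₁ r₂ : ℝ} (ha : 0 ≤ a) (hy : 0 ≤ y) (h₁ : 0 ≤ r₁) (h₁₂ : r₁ ≤ r₂)
    (h₂ : 0 ≤ y + r₂ * e) : rpowSubSq a y (y + r₁ * e) ≤ rpowSubSq a y (y + r₂ * e) := by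
  rcases le_total 0 e with he | he
  · have he₁ : 0 ≤ r₁ * e := mul_nonneg h₁ he
    have he₂ : r₁ * e ≤ r₂ * e := mul_le_mul_of_nonneg_right h₁₂ he
    exact monotoneOn_rpowSubSq ha hy (le_add_of_nonneg_right he₁)
      (le_add_of_nonneg_right (he₁.trans he₂)) (by linarith)
  · have he₁ : r₁ * e ≤ 0 := mul_nonpos_of_nonneg_of_nonpos h₁ he
    have he₂ : r₂ * e ≤ r₁ * e := mul_le_mul_of_nonpos_right h₁₂ he
    exact antitoneOn_rpowSubSq ha ⟨h₂, by linarith⟩ ⟨by linarith, by linarith⟩ (by linarith)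

/- The linear terms cancel because the directions add up to zero. -/
theorem mul_sq_sub_sq_le_sum_rpow_sub_sum_rpow {e₁ e₂ e₃ r₁ r₂ : ℝ} (ha : 0 ≤ a) (hy : 0 ≤ y)
    (h₁ : 0 ≤ r₁) (h₁₂ : r₁ ≤ r₂) (he_sq : 1 ≤ e₁ ^ 2 + e₂ ^ 2 + e₃ ^ 2) (he : e₁ + e₂ + e₃ = 0)
    (hy₁ : 0 ≤ y + r₂ * e₁) (hy₂ : 0 ≤ y + r₂ * e₂) (hy₃ : 0 ≤ y + r₂ * e₃) :
    y ^ a * (r₂ ^ 2 - r₁ ^ 2) ≤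
      ((y + r₂ * e₁) ^ (2 + a) + (y + r₂ * e₂) ^ (2 + a) + (y + r₂ * e₃) ^ (2 + a)) -
      ((y + r₁ * e₁) ^ (2 + a) + (y + r₁ * e₂) ^ (2 + a) + (y + r₁ * e₃) ^ (2 + a)) := by
  have ray₁ := rpowSubSq_le_on_ray ha hy h₁ h₁₂ hy₁
  have ray₂ := rpowSubSq_le_on_ray ha hy h₁ h₁₂ hy₂
  have ray₃ := rpowSubSq_le_on_ray ha hy h₁ h₁₂ hy₃
  unfold rpowSubSq at ray₁ ray₂ ray₃
  have sum_sq_eq (r : ℝ) : (y + r * e₁) ^ 2 + (y + r * e₂) ^ 2 + (y + r * e₃) ^ 2 =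
      3 * y ^ 2 + r ^ 2 * (e₁ ^ 2 + e₂ ^ 2 + e₃ ^ 2) := by
    linear_combination 2 * y * r * he
  have hr : 0 ≤ r₂ ^ 2 - r₁ ^ 2 := sub_nonneg.2 (pow_le_pow_left₀ h₁ h₁₂ 2)
  calc y ^ a * (r₂ ^ 2 - r₁ ^ 2)
      ≤ (2 + a) / 2 * y ^ a * ((r₂ ^ 2 - r₁ ^ 2) * (e₁ ^ 2 + e₂ ^ 2 + e₃ ^ 2)) := by
        gcongr
        · exact le_mul_of_one_le_left (by positivity) (by linarith)
        · exact le_mul_of_one_le_right hr he_sq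
    _ = (2 + a) / 2 * y ^ a * (((y + r₂ * e₁) ^ 2 + (y + r₂ * e₂) ^ 2 + (y + r₂ * e₃) ^ 2) -
          ((y + r₁ * e₁) ^ 2 + (y + r₁ * e₂) ^ 2 + (y + r₁ * e₃) ^ 2)) := by
        rw [sum_sq_eq, sum_sq_eq]
        ring
    _ ≤ _ := by linarith

/-- The part of the simplex `ξ₁ + ξ₂ + ξ₃ = s`, `ξᵢ > 0`, on which `∑ ξᵢ ^ (2 + a)` lies within `M`
of `c`, parametrised by `(ξ₁, ξ₂)`. -/
def simplexShell (a s c M : ℝ) : Set (ℝ × ℝ) :=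
  {p | 0 < p.1 ∧ 0 < p.2 ∧ 0 < s - p.1 - p.2 ∧
    |p.1 ^ (2 + a) + p.2 ^ (2 + a) + (s - p.1 - p.2) ^ (2 + a) - c| ≤ M}

theorem measurableSet_simplexShell (a s c M : ℝ) : MeasurableSet (simplexShell a s c M) := by
  unfold simplexShell
  measurability

theorem rpow_mul_volume_simplexShell_le (ha : 0 ≤ a) (s c M : ℝ) :
    ENNReal.ofReal ((s / 3) ^ a) * volume (simplexShell a s c M) ≤
      ENNReal.ofReal (2 * Real.pi * M) := by
  rcases le_or_gt s 0 with hs | hs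
  · have : simplexShell a s c M = ∅ :=
      Set.eq_empty_of_forall_notMem fun p ⟨h₁, h₂, h₃, _⟩ ↦ by linarith
    simp [this]
  have rpow_pos : 0 < (s / 3) ^ a := by positivity
  have volume_le : volume (simplexShell a s c M) ≤
      ENNReal.ofReal (Real.pi * (2 * M / (s / 3) ^ a)) := by
    refine volume_le_of_sq_sub_sq_le_on_rays (measurableSet_simplexShell a s c M) (s / 3, s / 3) ?_
    rintro θ r₁ r₂ hr₁ h₁₂ ⟨-, -, -, hM₁⟩ ⟨h₁, h₂, h₃, hM₂⟩
    have third_coord (r : ℝ) : s - (s / 3 + r * Real.cos θ) - (s / 3 + r * Real.sin θ) =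
        s / 3 + r * (-Real.cos θ - Real.sin θ) := by ring
    simp only [Prod.mk_add_mk, third_coord] at h₁ h₂ h₃ hM₁ hM₂
    have := mul_sq_sub_sq_le_sum_rpow_sub_sum_rpow (e₃ := -Real.cos θ - Real.sin θ) ha
      (by positivity) hr₁.le h₁₂ (by rw [Real.cos_sq_add_sin_sq]; nlinarith) (by ring)
      h₁.le h₂.le h₃.le
    rw [le_div_iff₀' rpow_pos]
    linarith [(abs_le.1 hM₁).1, (abs_le.1 hM₂).2]
  calc ENNReal.ofReal ((s / 3) ^ a) * volume (simplexShell a s c M)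
      ≤ ENNReal.ofReal ((s / 3) ^ a) * ENNReal.ofReal (Real.pi * (2 * M / (s / 3) ^ a)) := by
        gcongr
    _ = ENNReal.ofReal (2 * Real.pi * M) := by
        rw [← ENNReal.ofReal_mul rpow_pos.le]
        congr 1
        field_simp

end SimplexShell

section LevelSets

variable {V : Type*} [NormedAddCommGroup V] [InnerProductSpace ℝ V] [FiniteDimensional ℝ V]
  [MeasurableSpace V] [BorelSpace V]

theorem enorm_fourier_le {E : Type*} [NormedAddCommGroup E] [NormedSpace ℂ E] (f : V → E) (x : V) :
    ‖𝓕 f x‖ₑ ≤ ∫⁻ y, ‖f y‖ₑ := by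
  rw [Real.fourier_eq]
  refine (enorm_integral_le_lintegral_enorm _).trans_eq (lintegral_congr fun y ↦ ?_)
  rw [← ofReal_norm, Circle.norm_smul, ofReal_norm]

theorem fourier_add_of_integrable {E : Type*} [NormedAddCommGroup E] [NormedSpace ℂ E] {f g : V → E}
    (hf : Integrable f) (hg : Integrable g) : 𝓕 (f + g) = 𝓕 f + 𝓕 g :=
  VectorFourier.fourierIntegral_add Real.continuous_fourierChar continuous_inner hf hg

variable {G : V → ℂ} {S : Set V} {ρ : V → ℝ} {β A N t : ℝ}

theorem fourier_eq_zero_of_lintegral_enorm_sq_eq_zero (hG : Measurable G)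
    (hG₀ : ∫⁻ x, ‖G x‖ₑ ^ 2 = 0) : 𝓕 G = 0 := by
  have G_ae_eq : G =ᵐ[volume] 0 := by
    rw [lintegral_eq_zero_iff (by fun_prop)] at hG₀
    filter_upwards [hG₀] with x hx
    simpa using hx
  ext x
  rw [Real.fourier_congr_ae G_ae_eq]
  simp [Real.fourier_eq]

theorem enorm_fourier_sq_le_volume_support_mul (hG : Measurable G) (x : V) :
    ‖𝓕 G x‖ₑ ^ 2 ≤ volume (Function.support G) * ∫⁻ y, ‖G y‖ₑ ^ 2 := by
  have measurableSet_support := _root_.measurableSet_support hG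
  calc ‖𝓕 G x‖ₑ ^ 2
      ≤ (∫⁻ y, ‖G y‖ₑ) ^ 2 := by
        gcongr
        exact enorm_fourier_le G x
    _ ≤ (∫⁻ y, (Function.support G).indicator 1 y) * ∫⁻ y, ‖G y‖ₑ ^ 2 := by
        refine lintegral_sq_le_of_sq_le_mul (measurable_one.indicator measurableSet_support)
          (by fun_prop) fun y ↦ ?_
        by_cases hy : G y = 0 <;> simp [hy]
    _ = volume (Function.support G) * ∫⁻ y, ‖G y‖ₑ ^ 2 := by
        rw [lintegral_indicator_one measurableSet_support]

/-- A frequency set `S` with a positive size function `ρ` such that the part of `S` of size at most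
`R` has volume `O(R)`, while the weight `ρ ^ β` on `S` has a bounded threefold convolution. The
first condition controls low frequencies in `L^∞`, the second one high frequencies in `L⁶`. -/
structure IsTrilinearlyBounded (S : Set V) (ρ : V → ℝ) (β A : ℝ) (K : ℝ≥0∞) : Prop where
  measurableSet : MeasurableSet S
  measurable : Measurable ρ
  pos : ∀ x ∈ S, 0 < ρ x
  volume_le : ∀ R, 0 < R → volume (S ∩ {x | ρ x ≤ R}) ≤ ENNReal.ofReal (A * R)
  lconvolution_le : ∀ x, (S.indicator (fun y ↦ ENNReal.ofReal (ρ y ^ β)) ⋆ₗ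
    (S.indicator (fun y ↦ ENNReal.ofReal (ρ y ^ β)) ⋆ₗ
      S.indicator (fun y ↦ ENNReal.ofReal (ρ y ^ β)))) x ≤ K

namespace IsTrilinearlyBounded

variable {K : ℝ≥0∞}

theorem lintegral_enorm_fourier_indicator_pow_six_le (h : IsTrilinearlyBounded S ρ β A K)
    (hG : Integrable G) (hGm : Measurable G) (hGS : Function.support G ⊆ S) (R : ℝ) :
    ∫⁻ x, ‖𝓕 ({y | R < ρ y}.indicator G) x‖ₑ ^ 6 ≤
      K * tailMoment ρ (volume.withDensity (‖G ·‖ₑ ^ 2)) β R ^ 3 := by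
  have hρ := h.measurable
  have measurableSet_lt : MeasurableSet {y | R < ρ y} := measurableSet_lt measurable_const hρ
  let γ : V → ℝ≥0∞ := {y | R < ρ y}.indicator fun y ↦ ‖G y‖ₑ ^ 2 * ENNReal.ofReal (ρ y ^ (-β))
  have tailMoment_eq : tailMoment ρ (volume.withDensity (‖G ·‖ₑ ^ 2)) β R = ∫⁻ y, γ y := by
    rw [tailMoment, setLIntegral_withDensity_eq_setLIntegral_mul _ (by fun_prop) (by fun_prop)
      measurableSet_lt, lintegral_indicator measurableSet_lt]
    rfl
  rw [tailMoment_eq]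
  refine _root_.lintegral_enorm_fourier_pow_six_le (hG.indicator measurableSet_lt)
    (Measurable.indicator (by fun_prop) h.measurableSet)
    (Measurable.indicator (by fun_prop) measurableSet_lt) (fun x ↦ ?_) h.lconvolution_le
  by_cases hx : R < ρ x ∧ G x ≠ 0
  · have hxS : x ∈ S := hGS hx.2
    have := h.pos x hxS
    simp only [γ, Set.indicator_of_mem hxS, Set.indicator_of_mem (s := {y | R < ρ y}) hx.1]
    rw [mul_left_comm, ← ENNReal.ofReal_mul (by positivity), ← Real.rpow_add this]
    simp
  · have : {y | R < ρ y}.indicator G x = 0 := by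
      simpa [Set.indicator_apply_eq_zero] using hx
    simp [this]

/- The frequencies in `{ρ ≤ R}` contribute at most `(A * R * N) ^ (1 / 2)` to `𝓕 G`, and the radius
`R = t ^ 2 / (4 * A * N)` is chosen to make this `t / 2`. -/
theorem norm_fourier_indicator_le (h : IsTrilinearlyBounded S ρ β A K)
    (hGm : Measurable G) (hGS : Function.support G ⊆ S) (hA : 0 < A) (hN : 0 < N)
    (hGN : ∫⁻ x, ‖G x‖ₑ ^ 2 ≤ ENNReal.ofReal N) (ht : 0 < t) (x : V) :
    ‖𝓕 ({y | ρ y ≤ t ^ 2 / (4 * A * N)}.indicator G) x‖ ≤ t / 2 := by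
  set R := t ^ 2 / (4 * A * N) with hR
  set T := {y | ρ y ≤ R}
  have hT : MeasurableSet T := measurableSet_le h.measurable measurable_const
  have sq_le : ‖𝓕 (T.indicator G) x‖ₑ ^ 2 ≤ ENNReal.ofReal ((t / 2) ^ 2) :=
    calc ‖𝓕 (T.indicator G) x‖ₑ ^ 2
        ≤ volume (Function.support (T.indicator G)) * ∫⁻ y, ‖T.indicator G y‖ₑ ^ 2 :=
          enorm_fourier_sq_le_volume_support_mul (hGm.indicator hT) x
      _ ≤ ENNReal.ofReal (A * R) * ENNReal.ofReal N := by
          refine mul_le_mul' ?_ ((lintegral_mono fun y ↦ ?_).trans hGN)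
          · grw [Set.support_indicator, Set.inter_comm, hGS]
            exact h.volume_le R (by positivity)
          · gcongr
            exact enorm_indicator_le_enorm_self _ _
      _ = ENNReal.ofReal ((t / 2) ^ 2) := by
          rw [← ENNReal.ofReal_mul (by positivity), hR]
          congr 1
          field_simp
          norm_num
  rw [← ofReal_norm, ← ENNReal.ofReal_pow (norm_nonneg _),
    ENNReal.ofReal_le_ofReal_iff (by positivity)] at sq_le
  exact le_of_sq_le_sq sq_le (by positivity)

theorem pow_six_mul_volume_lt_norm_fourier_le (h : IsTrilinearlyBounded S ρ β A K)
    (hG : Integrable G) (hGm : Measurable G) (hGS : Function.support G ⊆ S) (hA : 0 < A)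
    (hN : 0 < N) (hGN : ∫⁻ x, ‖G x‖ₑ ^ 2 ≤ ENNReal.ofReal N) (ht : 0 < t) :
    ENNReal.ofReal (t ^ 6) * volume {x | t < ‖𝓕 G x‖} ≤
      64 * K * tailMoment ρ (volume.withDensity (‖G ·‖ₑ ^ 2)) β (t ^ 2 / (4 * A * N)) ^ 3 := by
  set R := t ^ 2 / (4 * A * N)
  set lo := {y | ρ y ≤ R}.indicator G
  set hi := {y | R < ρ y}.indicator G
  have integrable_lo : Integrable lo :=
    hG.indicator (measurableSet_le h.measurable measurable_const)
  have integrable_hi : Integrable hi :=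
    hG.indicator (measurableSet_lt measurable_const h.measurable)
  have lo_add_hi : lo + hi = G := by
    simpa only [Set.compl_ofPred, not_le] using Set.indicator_self_add_compl {y | ρ y ≤ R} G
  have continuous_hi : Continuous (𝓕 hi) := continuous_fourier_of_integrable integrable_hi
  have subset : {x | t < ‖𝓕 G x‖} ⊆ {x | ENNReal.ofReal ((t / 2) ^ 6) ≤ ‖𝓕 hi x‖ₑ ^ 6} := by
    intro x (hx : t < ‖𝓕 G x‖)
    have lo_le := h.norm_fourier_indicator_le hGm hGS hA hN hGN ht x
    rw [← lo_add_hi, fourier_add_of_integrable integrable_lo integrable_hi, Pi.add_apply] at hx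
    have le_hi : t / 2 ≤ ‖𝓕 hi x‖ := by linarith [norm_add_le (𝓕 lo x) (𝓕 hi x)]
    rw [Set.mem_ofPred_eq, ← ofReal_norm, ← ENNReal.ofReal_pow (norm_nonneg _)]
    gcongr
  calc ENNReal.ofReal (t ^ 6) * volume {x | t < ‖𝓕 G x‖}
      ≤ 64 * (ENNReal.ofReal ((t / 2) ^ 6) *
          volume {x | ENNReal.ofReal ((t / 2) ^ 6) ≤ ‖𝓕 hi x‖ₑ ^ 6}) := by
        grw [← subset, ← mul_assoc, show (64 : ℝ≥0∞) = ENNReal.ofReal 64 by simp,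
          ← ENNReal.ofReal_mul (by positivity)]
        ring_nf
        rfl
    _ ≤ 64 * ∫⁻ x, ‖𝓕 hi x‖ₑ ^ 6 := by
        gcongr
        exact mul_meas_ge_le_lintegral (by fun_prop) _
    _ ≤ _ := by
        grw [mul_assoc, h.lintegral_enorm_fourier_indicator_pow_six_le hG hGm hGS]

theorem lintegral_enorm_fourier_rpow_le {K : ℝ≥0} (h : IsTrilinearlyBounded S ρ β A K)
    (hG : Integrable G) (hGm : Measurable G) (hGS : Function.support G ⊆ S) (hβ : 0 < β)
    (hA : 0 < A) (hN : 0 < N) (hGN : ∫⁻ x, ‖G x‖ₑ ^ 2 ≤ ENNReal.ofReal N) :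
    ∫⁻ x, ‖𝓕 G x‖ₑ ^ (6 * (1 + β)) ≤
      ENNReal.ofReal (192 * (1 + β) / β * (4 * A * N) ^ (3 * β)) * K * ENNReal.ofReal N ^ 3 := by
  have withDensity_univ : (volume.withDensity (‖G ·‖ₑ ^ 2)) Set.univ ≤ ENNReal.ofReal N := by
    rwa [withDensity_apply _ .univ, setLIntegral_univ]
  have : IsFiniteMeasure (volume.withDensity (‖G ·‖ₑ ^ 2)) :=
    ⟨withDensity_univ.trans_lt ENNReal.ofReal_lt_top⟩
  have ae_pos : ∀ᵐ x ∂volume.withDensity (‖G ·‖ₑ ^ 2), 0 < ρ x := by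
    rw [ae_withDensity_iff (by fun_prop)]
    exact ae_of_all _ fun x hx ↦ h.pos x (hGS (by simpa using hx))
  calc ∫⁻ x, ‖𝓕 G x‖ₑ ^ (6 * (1 + β))
      = ∫⁻ x, ENNReal.ofReal (‖𝓕 G x‖ ^ (2 * ((2 : ℕ) + 1) * (1 + β))) := by
        refine lintegral_congr fun x ↦ ?_
        rw [← ofReal_norm, ENNReal.ofReal_rpow_of_nonneg (norm_nonneg _) (by positivity)]
        norm_num
    _ ≤ ENNReal.ofReal (((2 : ℕ) + 1) * (1 + β) / β * (4 * A * N) ^ (β * ((2 : ℕ) + 1))) *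
          (64 * K : ℝ≥0) * (volume.withDensity (‖G ·‖ₑ ^ 2)) Set.univ ^ (2 + 1) := by
        refine lintegral_rpow_le_of_meas_lt_le_tailMoment 2
          (continuous_fourier_of_integrable hG).norm.aemeasurable (fun _ ↦ norm_nonneg _)
          h.measurable ae_pos hβ (by positivity) fun t ht ↦ ?_
        exact_mod_cast h.pow_six_mul_volume_lt_norm_fourier_le hG hGm hGS hA hN hGN ht
    _ ≤ ENNReal.ofReal (3 * (1 + β) / β * (4 * A * N) ^ (3 * β)) * (64 * K) *
          ENNReal.ofReal N ^ 3 := by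
        grw [withDensity_univ]
        refine le_of_eq ?_
        push_cast
        ring_nf
    _ = _ := by
        rw [show 192 * (1 + β) / β * (4 * A * N) ^ (3 * β) =
          3 * (1 + β) / β * (4 * A * N) ^ (3 * β) * 64 by ring,
          ENNReal.ofReal_mul' (q := 64) (by norm_num), ENNReal.ofReal_ofNat, ← mul_assoc]

theorem lintegral_enorm_fourier_pow_six_le {K : ℝ≥0} (h : IsTrilinearlyBounded S ρ 0 A K)
    (hG : Integrable G) (hGm : Measurable G) (hGS : Function.support G ⊆ S) :
    ∫⁻ x, ‖𝓕 G x‖ₑ ^ 6 ≤ K * (∫⁻ x, ‖G x‖ₑ ^ 2) ^ 3 := by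
  have hρ := h.measurable
  refine _root_.lintegral_enorm_fourier_pow_six_le hG
    (Measurable.indicator (by fun_prop) h.measurableSet) (by fun_prop) (fun x ↦ ?_)
    h.lconvolution_le
  by_cases hx : G x = 0
  · simp [hx]
  · simp [hGS hx]

theorem exists_lintegral_enorm_fourier_rpow_le (V : Type*) [NormedAddCommGroup V]
    [InnerProductSpace ℝ V] [FiniteDimensional ℝ V] [MeasurableSpace V] [BorelSpace V]
    (hβ : 0 ≤ β) :
    ∃ C : ℝ≥0, ∀ {S : Set V} {ρ : V → ℝ} {A : ℝ} {K : ℝ≥0} {G : V → ℂ},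
      IsTrilinearlyBounded S ρ β A K → 0 < A → Integrable G → MemLp G 2 → Measurable G →
      Function.support G ⊆ S → ∫⁻ x, ‖𝓕 G x‖ₑ ^ (6 * (1 + β)) ≤
        C * (ENNReal.ofReal A ^ (3 * β) * K) * (∫⁻ x, ‖G x‖ₑ ^ 2) ^ (3 * (1 + β)) := by
  rcases hβ.eq_or_lt with rfl | hβ
  · refine ⟨1, fun h _ hG _ hGm hGS ↦ ?_⟩
    exact_mod_cast (by simpa using h.lintegral_enorm_fourier_pow_six_le hG hGm hGS)
  · refine ⟨(192 * (1 + β) / β * 4 ^ (3 * β)).toNNReal, fun {S ρ A K G} h hA hG hG₂ hGm hGS ↦ ?_⟩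
    set n := ∫⁻ x, ‖G x‖ₑ ^ 2 with hn
    have n_ne_top : n ≠ ∞ := by
      simpa [hn] using (eLpNorm_lt_top_iff_lintegral_rpow_enorm_lt_top two_ne_zero
        ENNReal.ofNat_ne_top).1 hG₂.2 |>.ne
    rcases eq_or_ne n 0 with hn₀ | hn₀
    · simp [fourier_eq_zero_of_lintegral_enorm_sq_eq_zero hGm hn₀,
        show 0 < 6 * (1 + β) by positivity]
    · have toReal_pos : 0 < n.toReal := ENNReal.toReal_pos hn₀ n_ne_top
      have ofReal_toReal : ENNReal.ofReal n.toReal = n := ENNReal.ofReal_toReal n_ne_top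
      grw [h.lintegral_enorm_fourier_rpow_le hG hGm hGS hβ hA toReal_pos ofReal_toReal.ge]
      refine le_of_eq ?_
      rw [show 192 * (1 + β) / β * (4 * A * n.toReal) ^ (3 * β) =
          192 * (1 + β) / β * 4 ^ (3 * β) * A ^ (3 * β) * n.toReal ^ (3 * β) by
        rw [Real.mul_rpow (by positivity) (by positivity), Real.mul_rpow (by positivity) hA.le]
        ring,
        ENNReal.ofReal_mul (by positivity), ENNReal.ofReal_mul (by positivity),
        ← ENNReal.ofReal_rpow_of_pos hA, ← ENNReal.ofReal_rpow_of_pos toReal_pos, ofReal_toReal,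
        show 3 * (1 + β) = 3 * β + (3 : ℕ) by push_cast; ring, ENNReal.rpow_add _ _ hn₀ n_ne_top,
        ENNReal.rpow_natCast, ENNReal.ofReal]
      ring

theorem exists_eLpNorm_fourier_le (V : Type*) [NormedAddCommGroup V]
    [InnerProductSpace ℝ V] [FiniteDimensional ℝ V] [MeasurableSpace V] [BorelSpace V]
    (hβ : 0 ≤ β) :
    ∃ C : ℝ≥0, ∀ {S : Set V} {ρ : V → ℝ} {A : ℝ} {K : ℝ≥0} {G : V → ℂ},
      IsTrilinearlyBounded S ρ β A K → 0 < A → Integrable G → MemLp G 2 → Measurable G →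
      Function.support G ⊆ S → eLpNorm (𝓕 G) (ENNReal.ofReal (6 * (1 + β))) ≤
        C * (ENNReal.ofReal A ^ (3 * β) * K) ^ (1 / (6 * (1 + β))) * eLpNorm G 2 := by
  obtain ⟨C, hC⟩ := exists_lintegral_enorm_fourier_rpow_le V hβ
  have exponent_pos : 0 < 6 * (1 + β) := by positivity
  refine ⟨C ^ (1 / (6 * (1 + β))), fun h hA hG hG₂ hGm hGS ↦ ?_⟩
  rw [eLpNorm_eq_lintegral_rpow_enorm_toReal (by simpa using exponent_pos) ENNReal.ofReal_ne_top,
    eLpNorm_eq_lintegral_rpow_enorm_toReal two_ne_zero ENNReal.ofNat_ne_top,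
    ENNReal.toReal_ofReal exponent_pos.le]
  grw [hC h hA hG hG₂ hGm hGS]
  rw [ENNReal.mul_rpow_of_nonneg _ _ (by positivity),
    ENNReal.mul_rpow_of_nonneg _ _ (by positivity), ← ENNReal.rpow_mul,
    ENNReal.coe_rpow_of_nonneg _ (by positivity)]
  refine le_of_eq ?_
  congr 2
  · simp
  · field_simp
    norm_num

end IsTrilinearlyBounded

end LevelSets

section Strip

/-- The frequency plane, with the Euclidean inner product on which Mathlib's Fourier transform of
functions of two variables is based. -/
abbrev Plane := WithLp 2 (ℝ × ℝ)

theorem lintegral_plane_le_of_near_graph {F : Plane → ℝ≥0∞} {φ : ℝ → ℝ} {H : ℝ → ℝ≥0∞} {M : ℝ}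
    (hF : ∀ p, F p ≠ 0 → |p.snd - φ p.fst| ≤ M) (hFH : ∀ p, F p ≤ H p.fst) :
    ∫⁻ p, F p ≤ ENNReal.ofReal (2 * M) * ∫⁻ x, H x := by
  have fiber_le (x : ℝ) : ∫⁻ y, F (WithLp.toLp 2 (x, y)) ≤ ENNReal.ofReal (2 * M) * H x :=
    calc ∫⁻ y, F (WithLp.toLp 2 (x, y))
        ≤ ∫⁻ y, (Metric.closedBall (φ x) M).indicator (fun _ ↦ H x) y := by
          refine lintegral_mono fun y ↦ ?_
          by_cases hy : F (WithLp.toLp 2 (x, y)) = 0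
          · simp [hy]
          · rw [Set.indicator_of_mem (by simpa [Real.dist_eq] using hF _ hy)]
            exact hFH _
      _ = ENNReal.ofReal (2 * M) * H x := by
          rw [lintegral_indicator_const Metric.isClosed_closedBall.measurableSet,
            Real.volume_closedBall, mul_comm]
  calc ∫⁻ p, F p = ∫⁻ p : ℝ × ℝ, F (WithLp.toLp 2 p) :=
        ((WithLp.volume_preserving_toLp ℝ ℝ).lintegral_comp_emb
          (MeasurableEquiv.toLp 2 (ℝ × ℝ)).measurableEmbedding F).symm
    _ ≤ ∫⁻ x, ∫⁻ y, F (WithLp.toLp 2 (x, y)) := lintegral_prod_le _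
    _ ≤ ∫⁻ x, ENNReal.ofReal (2 * M) * H x := lintegral_mono fiber_le
    _ = ENNReal.ofReal (2 * M) * ∫⁻ x, H x := lintegral_const_mul' _ _ ENNReal.ofReal_ne_top

theorem lconvolution_lconvolution_le_of_near_graph {f g h : Plane → ℝ≥0∞} {φ : ℝ → ℝ} {M : ℝ}
    {H : ℝ → ℝ → ℝ≥0∞} {P : Plane} (hf : ∀ p, f p ≠ 0 → |p.snd - φ p.fst| ≤ M)
    (hg : ∀ p, g p ≠ 0 → |p.snd - φ p.fst| ≤ M)
    (hH : ∀ p q, f p * (g q * h (P - p - q)) ≤ H p.fst q.fst) :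
    (f ⋆ₗ (g ⋆ₗ h)) P ≤ ENNReal.ofReal (2 * M) ^ 2 * ∫⁻ x, ∫⁻ y, H x y := by
  have inner_le (p : Plane) :
      f p * (g ⋆ₗ h) (-p + P) ≤ ENNReal.ofReal (2 * M) * ∫⁻ y, H p.fst y :=
    calc f p * (g ⋆ₗ h) (-p + P)
        ≤ ∫⁻ q, f p * (g q * h (P - p - q)) := by
          rw [lconvolution_def]
          grw [lintegral_const_mul_le]
          refine (lintegral_congr fun q ↦ ?_).le
          rw [show -q + (-p + P) = P - p - q by abel]
      _ ≤ ENNReal.ofReal (2 * M) * ∫⁻ y, H p.fst y :=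
          lintegral_plane_le_of_near_graph
            (fun q hq ↦ hg q (left_ne_zero_of_mul (right_ne_zero_of_mul hq))) (hH p)
  calc (f ⋆ₗ (g ⋆ₗ h)) P
      ≤ ENNReal.ofReal (2 * M) * ∫⁻ x, ENNReal.ofReal (2 * M) * ∫⁻ y, H x y :=
        lintegral_plane_le_of_near_graph (fun p hp ↦ hf p (left_ne_zero_of_mul hp)) inner_le
    _ = ENNReal.ofReal (2 * M) ^ 2 * ∫⁻ x, ∫⁻ y, H x y := by
        rw [lintegral_const_mul' _ _ ENNReal.ofReal_ne_top]
        ring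

variable {a M : ℝ}

/-- The part `ξ > 0` of the set of frequencies `(ξ, λ)` at vertical distance at most `M` from the
curve `λ = ξ ^ (2 + a)`. -/
def strip (a M : ℝ) : Set Plane := {p | 0 < p.fst ∧ |p.snd - p.fst ^ (2 + a)| ≤ M}

theorem measurableSet_strip (a M : ℝ) : MeasurableSet (strip a M) := by
  unfold strip
  measurability

theorem volume_strip_inter_fst_le (a M R : ℝ) :
    volume (strip a M ∩ {p | p.fst ≤ R}) ≤ ENNReal.ofReal (2 * M) * ENNReal.ofReal R := by
  have measurableSet_inter : MeasurableSet (strip a M ∩ {p | p.fst ≤ R}) :=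
    (measurableSet_strip a M).inter (by measurability)
  calc volume (strip a M ∩ {p | p.fst ≤ R})
      = ∫⁻ p, (strip a M ∩ {p | p.fst ≤ R}).indicator 1 p :=
        (lintegral_indicator_one measurableSet_inter).symm
    _ ≤ ENNReal.ofReal (2 * M) * ∫⁻ x, (Set.Ioc 0 R).indicator 1 x := by
        refine lintegral_plane_le_of_near_graph (φ := (· ^ (2 + a)))
          (fun p hp ↦ (Set.mem_of_indicator_ne_zero hp).1.2) fun p ↦ ?_
        exact Set.indicator_le_indicator_of_subset (t := {p : Plane | p.fst ∈ Set.Ioc 0 R})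
          (fun p hp ↦ ⟨hp.1.1, hp.2⟩) (fun _ ↦ zero_le) p
    _ = ENNReal.ofReal (2 * M) * ENNReal.ofReal R := by
        rw [lintegral_indicator_one measurableSet_Ioc, Real.volume_Ioc, sub_zero]

theorem rpow_third_mul_rpow_third_mul_rpow_third_le {x y z : ℝ} (ha : 0 ≤ a) (hx : 0 ≤ x)
    (hy : 0 ≤ y) (hz : 0 ≤ z) :
    x ^ (a / 3) * (y ^ (a / 3) * z ^ (a / 3)) ≤ ((x + y + z) / 3) ^ a :=
  calc x ^ (a / 3) * (y ^ (a / 3) * z ^ (a / 3))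
      = (x ^ (1 / 3 : ℝ) * y ^ (1 / 3 : ℝ) * z ^ (1 / 3 : ℝ)) ^ a := by
        rw [Real.mul_rpow (by positivity) (by positivity), Real.mul_rpow (by positivity)
          (by positivity), ← Real.rpow_mul hx, ← Real.rpow_mul hy, ← Real.rpow_mul hz, mul_assoc,
          one_div_mul_eq_div]
    _ ≤ ((x + y + z) / 3) ^ a := by
        gcongr
        refine (Real.geom_mean_le_arith_mean3_weighted (by norm_num) (by norm_num) (by norm_num)
          hx hy hz (by norm_num)).trans_eq ?_
        ring

theorem strip_weight_mul_le (ha : 0 ≤ a) (P p q : Plane) :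
    (strip a M).indicator (fun p ↦ ENNReal.ofReal (p.fst ^ (a / 3))) p *
      ((strip a M).indicator (fun p ↦ ENNReal.ofReal (p.fst ^ (a / 3))) q *
        (strip a M).indicator (fun p ↦ ENNReal.ofReal (p.fst ^ (a / 3))) (P - p - q)) ≤
      ENNReal.ofReal ((P.fst / 3) ^ a) *
        (simplexShell a P.fst P.snd (3 * M)).indicator 1 (p.fst, q.fst) := by
  by_cases hpq : p ∈ strip a M ∧ q ∈ strip a M ∧ P - p - q ∈ strip a M
  · obtain ⟨hp, hq, hr⟩ := hpq
    have mem_shell : (p.fst, q.fst) ∈ simplexShell a P.fst P.snd (3 * M) := by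
      refine ⟨hp.1, hq.1, hr.1, ?_⟩
      calc |p.fst ^ (2 + a) + q.fst ^ (2 + a) + (P.fst - p.fst - q.fst) ^ (2 + a) - P.snd|
          = |(p.snd - p.fst ^ (2 + a)) + (q.snd - q.fst ^ (2 + a)) +
              ((P - p - q).snd - (P - p - q).fst ^ (2 + a))| := by
            rw [abs_sub_comm]
            simp only [WithLp.sub_snd, WithLp.sub_fst]
            ring_nf
        _ ≤ M + M + M := (abs_add_three _ _ _).trans (add_le_add_three hp.2 hq.2 hr.2)
        _ = 3 * M := by ring
    rw [Set.indicator_of_mem hp, Set.indicator_of_mem hq, Set.indicator_of_mem hr,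
      Set.indicator_of_mem mem_shell, Pi.one_apply, mul_one,
      ← ENNReal.ofReal_mul (Real.rpow_nonneg hq.1.le _),
      ← ENNReal.ofReal_mul (Real.rpow_nonneg hp.1.le _)]
    refine ENNReal.ofReal_le_ofReal ?_
    refine (rpow_third_mul_rpow_third_mul_rpow_third_le ha hp.1.le hq.1.le hr.1.le).trans_eq ?_
    congr 2
    simp
  · have : p ∉ strip a M ∨ q ∉ strip a M ∨ P - p - q ∉ strip a M := by tauto
    rcases this with h | h | h <;> simp [h]

theorem isTrilinearlyBounded_strip (ha : 0 ≤ a) (hM : 0 ≤ M) :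
    IsTrilinearlyBounded (strip a M) (WithLp.fst ·) (a / 3) (2 * M)
      (24 * Real.pi * M ^ 3).toNNReal where
  measurableSet := measurableSet_strip a M
  measurable := by fun_prop
  pos _ hp := hp.1
  volume_le R _ := by
    rw [ENNReal.ofReal_mul (by positivity)]
    exact volume_strip_inter_fst_le a M R
  lconvolution_le P := by
    have measurableSet_shell := measurableSet_simplexShell a P.fst P.snd (3 * M)
    calc _ ≤ ENNReal.ofReal (2 * M) ^ 2 * ∫⁻ x, ∫⁻ y, ENNReal.ofReal ((P.fst / 3) ^ a) *
            (simplexShell a P.fst P.snd (3 * M)).indicator 1 (x, y) :=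
          lconvolution_lconvolution_le_of_near_graph (φ := (· ^ (2 + a)))
            (fun p hp ↦ (Set.mem_of_indicator_ne_zero hp).2)
            (fun p hp ↦ (Set.mem_of_indicator_ne_zero hp).2) (strip_weight_mul_le ha P)
      _ = ENNReal.ofReal (2 * M) ^ 2 *
            (ENNReal.ofReal ((P.fst / 3) ^ a) * volume (simplexShell a P.fst P.snd (3 * M))) := by
          simp_rw [lintegral_const_mul' _ _ ENNReal.ofReal_ne_top]
          rw [← lintegral_indicator_one measurableSet_shell, Measure.volume_eq_prod,
            lintegral_prod _ (measurable_one.indicator measurableSet_shell).aemeasurable]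
      _ ≤ ENNReal.ofReal (2 * M) ^ 2 * ENNReal.ofReal (2 * Real.pi * (3 * M)) := by
          grw [rpow_mul_volume_simplexShell_le ha]
      _ ≤ ENNReal.ofReal (24 * Real.pi * M ^ 3) := by
          rw [← ENNReal.ofReal_pow (by positivity), ← ENNReal.ofReal_mul (by positivity)]
          refine (congrArg ENNReal.ofReal ?_).le
          ring

theorem exists_eLpNorm_fourier_le_of_support_strip (ha : 0 ≤ a) :
    ∃ C : ℝ≥0, ∀ {M : ℝ} {G : Plane → ℂ}, 0 < M → Integrable G → MemLp G 2 → Measurable G →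
      Function.support G ⊆ strip a M → eLpNorm (𝓕 G) (ENNReal.ofReal (2 * (3 + a))) ≤
        C * ENNReal.ofReal M ^ (1 / 2 : ℝ) * eLpNorm G 2 := by
  obtain ⟨C, hC⟩ := IsTrilinearlyBounded.exists_eLpNorm_fourier_le Plane
    (show 0 ≤ a / 3 by positivity)
  refine ⟨C * ((2 ^ a * (24 * Real.pi)) ^ (1 / (2 * (3 + a)))).toNNReal,
    fun {M G} hM hG hG₂ hGm hGS ↦ ?_⟩
  have := hC (isTrilinearlyBounded_strip ha hM.le) (by positivity) hG hG₂ hGm hGS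
  rw [show 6 * (1 + a / 3) = 2 * (3 + a) by ring] at this
  refine this.trans_eq ?_
  rw [ENNReal.coe_mul, mul_assoc (C : ℝ≥0∞) (ENNReal.ofNNReal _)]
  congr 2
  change (_ * ENNReal.ofReal _) ^ _ = ENNReal.ofReal _ * _
  rw [ENNReal.ofReal_rpow_of_pos (by positivity), ← ENNReal.ofReal_mul (by positivity),
    ENNReal.ofReal_rpow_of_pos (by positivity), ENNReal.ofReal_rpow_of_pos hM,
    ← ENNReal.ofReal_mul (by positivity)]
  congr 1
  rw [show (2 * M) ^ (3 * (a / 3)) * (24 * Real.pi * M ^ 3) =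
    2 ^ a * (24 * Real.pi) * M ^ (3 + a) by
      rw [Real.mul_rpow (by positivity) hM.le, Real.rpow_add hM]
      norm_cast
      ring_nf, Real.mul_rpow (by positivity) (by positivity), ← Real.rpow_mul hM.le]
  congr 2
  field_simp

theorem disp_of_pos {ξ : ℝ} (hξ : 0 < ξ) (a : ℝ) : disp a ξ = ξ ^ (2 + a) := by
  rw [disp, abs_of_pos hξ, show 2 + a = 1 + (1 + a) by ring, Real.rpow_add hξ 1 (1 + a),
    Real.rpow_one]

theorem disp_neg (a ξ : ℝ) : disp a (-ξ) = -disp a ξ := by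
  simp [disp]

theorem eLpNorm_fourier_comp_neg {V : Type*} [NormedAddCommGroup V] [InnerProductSpace ℝ V]
    [FiniteDimensional ℝ V] [MeasurableSpace V] [BorelSpace V] {G : V → ℂ} (hG : Integrable G)
    (p : ℝ≥0∞) : eLpNorm (𝓕 fun x ↦ G (-x)) p = eLpNorm (𝓕 G) p := by
  have fourier_eq : (𝓕 fun x ↦ G (-x)) = 𝓕 G ∘ Neg.neg :=
    funext (Real.fourier_comp_linearIsometry (LinearIsometryEquiv.neg ℝ) G)
  rw [fourier_eq, eLpNorm_comp_measurePreserving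
    (continuous_fourier_of_integrable hG).aestronglyMeasurable
    (Measure.measurePreserving_neg volume)]

theorem exists_eLpNorm_fourier_le_of_support_strip_or_neg_strip (ha : 0 ≤ a) :
    ∃ C : ℝ≥0, ∀ {M : ℝ} {G : Plane → ℂ}, 0 < M → Integrable G → MemLp G 2 → Measurable G →
      Function.support G ⊆ strip a M ∨ Function.support G ⊆ Neg.neg ⁻¹' strip a M →
      eLpNorm (𝓕 G) (ENNReal.ofReal (2 * (3 + a))) ≤
        C * ENNReal.ofReal M ^ (1 / 2 : ℝ) * eLpNorm G 2 := by
  obtain ⟨C, hC⟩ := exists_eLpNorm_fourier_le_of_support_strip ha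
  refine ⟨C, fun {M G} hM hG hG₂ hGm hGS ↦ ?_⟩
  rcases hGS with hGS | hGS
  · exact hC hM hG hG₂ hGm hGS
  have measurePreserving_neg := Measure.measurePreserving_neg (volume : Measure Plane)
  rw [← eLpNorm_fourier_comp_neg hG,
    ← eLpNorm_comp_measurePreserving hGm.aestronglyMeasurable measurePreserving_neg]
  exact hC hM hG.comp_neg (hG₂.comp_measurePreserving measurePreserving_neg)
    (hGm.comp measurable_neg) fun p hp ↦ by simpa using hGS hp

theorem indicator_fst_pos_add_indicator_fst_neg_ae_eq {E : Type*} [AddZeroClass E] (G : Plane → E) :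
    {p : Plane | 0 < p.fst}.indicator G + {p : Plane | p.fst < 0}.indicator G =ᵐ[volume] G := by
  have fst_ne_zero : ∀ᵐ p : Plane, p.fst ≠ 0 :=
    (WithLp.volume_preserving_ofLp ℝ ℝ).quasiMeasurePreserving.ae
      (Measure.quasiMeasurePreserving_fst.ae (Measure.ae_ne volume 0))
  filter_upwards [fst_ne_zero] with p hp
  rcases hp.lt_or_gt with h | h <;> simp [h, h.not_gt]

theorem exists_eLpNorm_fourier_le_of_near_disp (ha : 0 ≤ a) :
    ∃ C : ℝ≥0, ∀ {M : ℝ} {G : Plane → ℂ}, 0 < M → Integrable G → MemLp G 2 → Measurable G →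
      (∀ p, G p ≠ 0 → |p.snd - disp a p.fst| ≤ M) →
      eLpNorm (𝓕 G) (ENNReal.ofReal (2 * (3 + a))) ≤
        C * ENNReal.ofReal M ^ (1 / 2 : ℝ) * eLpNorm G 2 := by
  obtain ⟨C, hC⟩ := exists_eLpNorm_fourier_le_of_support_strip_or_neg_strip ha
  refine ⟨2 * C, fun {M G} hM hG hG₂ hGm hGS ↦ ?_⟩
  have half_le {T : Set Plane} (hT : MeasurableSet T)
      (hTS : Function.support (T.indicator G) ⊆ strip a M ∨
        Function.support (T.indicator G) ⊆ Neg.neg ⁻¹' strip a M) :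
      eLpNorm (𝓕 (T.indicator G)) (ENNReal.ofReal (2 * (3 + a))) ≤
        C * ENNReal.ofReal M ^ (1 / 2 : ℝ) * eLpNorm G 2 := by
    grw [hC hM (hG.indicator hT) (hG₂.indicator hT) (hGm.indicator hT) hTS, eLpNorm_indicator_le]
  have measurableSet_pos : MeasurableSet {p : Plane | 0 < p.fst} := by measurability
  have measurableSet_neg : MeasurableSet {p : Plane | p.fst < 0} := by measurability
  have pos_le := half_le measurableSet_pos <| .inl fun p hp ↦ by
    obtain ⟨hp, hGp⟩ : 0 < p.fst ∧ G p ≠ 0 := by simpa using hp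
    exact ⟨hp, by simpa only [disp_of_pos hp] using hGS p hGp⟩
  have neg_le := half_le measurableSet_neg <| .inr fun p hp ↦ by
    obtain ⟨hp, hGp⟩ : p.fst < 0 ∧ G p ≠ 0 := by simpa using hp
    have neg_pos : 0 < (-p).fst := neg_pos.2 hp
    refine ⟨neg_pos, ?_⟩
    rw [← disp_of_pos neg_pos, WithLp.neg_fst, disp_neg, WithLp.neg_snd, ← neg_sub', abs_neg]
    exact hGS p hGp
  have fourier_eq : 𝓕 G = 𝓕 ({p | 0 < p.fst}.indicator G) + 𝓕 ({p | p.fst < 0}.indicator G) := by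
    rw [← fourier_add_of_integrable (hG.indicator measurableSet_pos)
      (hG.indicator measurableSet_neg)]
    exact funext (Real.fourier_congr_ae (indicator_fst_pos_add_indicator_fst_neg_ae_eq G).symm)
  rw [fourier_eq]
  grw [eLpNorm_add_le
    (continuous_fourier_of_integrable (hG.indicator measurableSet_pos)).aestronglyMeasurable
    (continuous_fourier_of_integrable (hG.indicator measurableSet_neg)).aestronglyMeasurable
    (ENNReal.one_le_ofReal.2 (by linarith)), pos_le, neg_le]
  push_cast
  exact le_of_eq (by ring)

end Strip

section Summation

variable {X E : Type*} [MeasurableSpace X] {μ : Measure X} [NormedAddCommGroup E]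

theorem eLpNorm_le_tsum_of_hasSum {F : ℕ → X → E} {f : X → E} {p : ℝ≥0∞} (hp : 1 ≤ p)
    (hF : ∀ j, AEStronglyMeasurable (F j) μ) (hFf : ∀ᵐ x ∂μ, HasSum (fun j ↦ F j x) (f x)) :
    eLpNorm f p μ ≤ ∑' j, eLpNorm (F j) p μ := by
  have tendsto_sum : ∀ᵐ x ∂μ, Filter.Tendsto (fun n ↦ (∑ j ∈ Finset.range n, F j) x)
      Filter.atTop (nhds (f x)) := by
    filter_upwards [hFf] with x hx
    simpa only [Finset.sum_apply] using hx.tendsto_sum_nat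
  calc eLpNorm f p μ
      ≤ Filter.atTop.liminf fun n ↦ eLpNorm (∑ j ∈ Finset.range n, F j) p μ :=
        Lp.eLpNorm_lim_le_liminf_eLpNorm
          (fun n ↦ Finset.aestronglyMeasurable_sum _ fun j _ ↦ hF j) f tendsto_sum
    _ ≤ Filter.atTop.liminf fun _ : ℕ ↦ ∑' j, eLpNorm (F j) p μ :=
        Filter.liminf_le_liminf <| .of_forall fun n ↦
          (eLpNorm_sum_le (fun j _ ↦ hF j) hp).trans (ENNReal.sum_le_tsum _)
    _ = ∑' j, eLpNorm (F j) p μ := Filter.liminf_const _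

theorem eLpNorm_two_smul_le [NormedSpace ℝ E] {w : X → ℝ} {g : X → E} (hw₀ : ∀ x, 0 ≤ w x)
    (hw₁ : ∀ x, w x ≤ 1) (hwg : Integrable (fun x ↦ w x * ‖g x‖ ^ 2) μ) :
    eLpNorm (fun x ↦ w x • g x) 2 μ ≤
      ENNReal.ofReal ((∫ x, w x * ‖g x‖ ^ 2 ∂μ) ^ (1 / 2 : ℝ)) := by
  have enorm_sq_le (x : X) : ‖w x • g x‖ₑ ^ 2 ≤ ENNReal.ofReal (w x * ‖g x‖ ^ 2) := by
    rw [← ofReal_norm, ← ENNReal.ofReal_pow (norm_nonneg _), norm_smul, mul_pow,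
      Real.norm_of_nonneg (hw₀ x)]
    gcongr
    exact pow_le_of_le_one (hw₀ x) (hw₁ x) two_ne_zero
  have hwg₀ (x : X) : 0 ≤ w x * ‖g x‖ ^ 2 := mul_nonneg (hw₀ x) (sq_nonneg _)
  rw [eLpNorm_eq_lintegral_rpow_enorm_toReal two_ne_zero ENNReal.ofNat_ne_top,
    ← ENNReal.ofReal_rpow_of_nonneg (integral_nonneg hwg₀) one_half_pos.le,
    ofReal_integral_eq_lintegral_ofReal hwg (.of_forall hwg₀), ENNReal.toReal_ofNat]
  gcongr with x
  exact_mod_cast enorm_sq_le x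

theorem integrable_smul_of_hasSum [NormedSpace ℝ E] {w : ℕ → X → ℝ} {g : X → E}
    (hw : ∀ j, Measurable (w j)) (hw₀ : ∀ j x, 0 ≤ w j x) (hw₁ : ∀ x, HasSum (fun j ↦ w j x) 1)
    (hg : Integrable g μ) (j : ℕ) : Integrable (fun x ↦ w j x • g x) μ := by
  refine hg.bdd_smul 1 (hw j).aestronglyMeasurable (.of_forall fun x ↦ ?_)
  rw [Real.norm_of_nonneg (hw₀ j x)]
  exact le_hasSum (hw₁ x) j fun i _ ↦ hw₀ i x

theorem hasSum_fourier_smul {V : Type*} [NormedAddCommGroup V] [InnerProductSpace ℝ V]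
    [MeasurableSpace V] [BorelSpace V] [FiniteDimensional ℝ V] [NormedSpace ℂ E]
    {w : ℕ → V → ℝ} {g : V → E} (hw : ∀ j, Measurable (w j)) (hw₀ : ∀ j x, 0 ≤ w j x)
    (hw₁ : ∀ x, HasSum (fun j ↦ w j x) 1) (hg : Integrable g) (z : V) :
    HasSum (fun j ↦ 𝓕 (fun x ↦ w j x • g x) z) (𝓕 g z) := by
  simp only [Real.fourier_eq]
  refine hasSum_integral_of_dominated_convergence (fun j x ↦ w j x * ‖g x‖) (fun j ↦ ?_)
    (fun j ↦ .of_forall fun x ↦ ?_) (.of_forall fun x ↦ ((hw₁ x).mul_right _).summable) ?_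
    (.of_forall fun x ↦ ?_)
  · exact (Real.fourierIntegral_convergent_iff z).2
      (integrable_smul_of_hasSum hw hw₀ hw₁ hg j) |>.aestronglyMeasurable
  · rw [Circle.norm_smul, norm_smul, Real.norm_of_nonneg (hw₀ j x)]
  · simpa only [tsum_mul_right, (hw₁ _).tsum_eq, one_mul] using hg.norm
  · simpa only [one_smul] using ((hw₁ x).smul_const (g x)).const_smul _

theorem eLpNorm_fourier_le_tsum_smul {V : Type*} [NormedAddCommGroup V] [InnerProductSpace ℝ V]
    [MeasurableSpace V] [BorelSpace V] [FiniteDimensional ℝ V] {w : ℕ → V → ℝ} {g : V → ℂ}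
    (hw : ∀ j, Measurable (w j)) (hw₀ : ∀ j x, 0 ≤ w j x) (hw₁ : ∀ x, HasSum (fun j ↦ w j x) 1)
    (hg : Integrable g) {p : ℝ≥0∞} (hp : 1 ≤ p) :
    eLpNorm (𝓕 g) p ≤ ∑' j, eLpNorm (𝓕 fun x ↦ w j x • g x) p :=
  eLpNorm_le_tsum_of_hasSum hp
    (fun j ↦ (continuous_fourier_of_integrable
      (integrable_smul_of_hasSum hw hw₀ hw₁ hg j)).aestronglyMeasurable)
    (.of_forall (hasSum_fourier_smul hw hw₀ hw₁ hg))

/-- A partition of unity `∑ w j = 1` on `ℝ` by nonnegative measurable functions, where `w j` lives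
at scale `2 ^ j`: on its support `|z| ≤ 2 ^ (j + 1)` and `1 + |z| ≥ 2 ^ (j - 1)`. Only the size of
the supports matters for the estimate, so no smoothness is required. -/
structure IsDyadicPartition (w : ℕ → ℝ → ℝ) : Prop where
  measurable : ∀ j, Measurable (w j)
  nonneg : ∀ j z, 0 ≤ w j z
  hasSum : ∀ z, HasSum (fun j ↦ w j z) 1
  abs_le : ∀ {j z}, w j z ≠ 0 → |z| ≤ 2 * 2 ^ j
  le_abs : ∀ {j z}, w j z ≠ 0 → 2 ^ j ≤ 2 * (1 + |z|)

/-- The `j`-th term `2 ^ (j / 2) (∫ w_j(φ) |g|²) ^ (1 / 2)` of the `X^{1/2}_0` norm, where `φ`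
stands for the modulation `λ - ω(ξ)` and `g` for the space-time Fourier transform. -/
def dyadicTerm (μ : Measure X) (w : ℕ → ℝ → ℝ) (φ : X → ℝ) (g : X → E) (j : ℕ) : ℝ :=
  2 ^ ((j : ℝ) * (1 / 2)) * (∫ x, w j (φ x) * ‖g x‖ ^ 2 ∂μ) ^ (1 / 2 : ℝ)

theorem measurable_modulation (a : ℝ) : Measurable fun p : Plane ↦ p.snd - disp a p.fst := by
  unfold disp
  fun_prop

namespace IsDyadicPartition

variable {w : ℕ → ℝ → ℝ} (hw : IsDyadicPartition w) {φ : X → ℝ} {g : X → E}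
include hw

theorem le_one (j : ℕ) (z : ℝ) : w j z ≤ 1 :=
  le_hasSum (hw.hasSum z) j fun i _ ↦ hw.nonneg i z

theorem integrable_mul_norm_sq (hφ : Measurable φ) (hg : MemLp g 2 μ) (j : ℕ) :
    Integrable (fun x ↦ w j (φ x) * ‖g x‖ ^ 2) μ := by
  refine (hg.integrable_norm_pow two_ne_zero).bdd_mul (c := 1)
    ((hw.measurable j).comp hφ).aestronglyMeasurable (.of_forall fun x ↦ ?_)
  rw [Real.norm_of_nonneg (hw.nonneg _ _)]
  exact hw.le_one _ _

theorem mul_sq_nonneg (j : ℕ) (z r : ℝ) : 0 ≤ w j z * r ^ 2 :=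
  mul_nonneg (hw.nonneg j z) (sq_nonneg r)

theorem dyadicTerm_nonneg (j : ℕ) : 0 ≤ dyadicTerm μ w φ g j :=
  mul_nonneg (by positivity) (Real.rpow_nonneg (integral_nonneg fun _ ↦ hw.mul_sq_nonneg j _ _) _)

theorem integral_mul_norm_sq_le (hφg : Integrable (fun x ↦ (1 + |φ x|) ^ 2 * ‖g x‖ ^ 2) μ)
    (j : ℕ) : ∫ x, w j (φ x) * ‖g x‖ ^ 2 ∂μ ≤
      4 * (∫ x, (1 + |φ x|) ^ 2 * ‖g x‖ ^ 2 ∂μ) * (1 / 4) ^ j := by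
  have weight_le (z : ℝ) : w j z ≤ 4 * (1 / 4) ^ j * (1 + |z|) ^ 2 := by
    by_cases hz : w j z = 0
    · rw [hz]; positivity
    calc w j z ≤ 1 := hw.le_one j z
      _ = (1 / 4) ^ j * (2 ^ j) ^ 2 := by rw [← pow_mul, mul_comm j, pow_mul, ← mul_pow]; norm_num
      _ ≤ (1 / 4) ^ j * (2 * (1 + |z|)) ^ 2 := by gcongr; exact hw.le_abs hz
      _ = 4 * (1 / 4) ^ j * (1 + |z|) ^ 2 := by ring
  rw [mul_right_comm, ← integral_const_mul]
  refine integral_mono_of_nonneg (.of_forall fun _ ↦ hw.mul_sq_nonneg j _ _) (hφg.const_mul _)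
    (.of_forall fun x ↦ ?_)
  dsimp only
  grw [weight_le, mul_assoc]

theorem summable_dyadicTerm (hφg : Integrable (fun x ↦ (1 + |φ x|) ^ 2 * ‖g x‖ ^ 2) μ) :
    Summable (dyadicTerm μ w φ g) := by
  set B := 4 * ∫ x, (1 + |φ x|) ^ 2 * ‖g x‖ ^ 2 ∂μ
  have B_nonneg : 0 ≤ B := mul_nonneg zero_le_four (integral_nonneg fun x ↦ by positivity)
  have ratio_lt_one : (1 / 2 : ℝ) ^ (1 / 2 : ℝ) < 1 :=
    Real.rpow_lt_one (by norm_num) (by norm_num) (by norm_num)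
  refine .of_nonneg_of_le hw.dyadicTerm_nonneg (fun j ↦ ?_)
    ((summable_geometric_of_lt_one (by positivity) ratio_lt_one).mul_left (B ^ (1 / 2 : ℝ)))
  calc dyadicTerm μ w φ g j
      ≤ 2 ^ ((j : ℝ) * (1 / 2)) * (B * (1 / 4) ^ j) ^ (1 / 2 : ℝ) := by
        rw [dyadicTerm]
        gcongr
        exacts [integral_nonneg fun _ ↦ hw.mul_sq_nonneg j _ _, hw.integral_mul_norm_sq_le hφg j]
    _ = (2 ^ j * (B * (1 / 4) ^ j)) ^ (1 / 2 : ℝ) := by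
        rw [Real.rpow_mul zero_le_two, ← Real.mul_rpow (by positivity) (by positivity),
          Real.rpow_natCast]
    _ = B ^ (1 / 2 : ℝ) * ((1 / 2 : ℝ) ^ (1 / 2 : ℝ)) ^ j := by
        rw [mul_left_comm, ← mul_pow, Real.mul_rpow B_nonneg (by positivity),
          Real.rpow_pow_comm (by norm_num)]
        norm_num

theorem exists_eLpNorm_fourier_le_tsum {a : ℝ} (ha : 0 ≤ a) :
    ∃ C : ℝ≥0, ∀ {g : Plane → ℂ}, Measurable g → Integrable g → MemLp g 2 →
      eLpNorm (𝓕 g) (ENNReal.ofReal (2 * (3 + a))) ≤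
        C * ∑' j, ENNReal.ofReal (dyadicTerm volume w (fun p ↦ p.snd - disp a p.fst) g j) := by
  obtain ⟨C, hC⟩ := exists_eLpNorm_fourier_le_of_near_disp ha
  refine ⟨C * 2 ^ (1 / 2 : ℝ), fun {g} hgm hg hg₂ ↦ ?_⟩
  set φ : Plane → ℝ := fun p ↦ p.snd - disp a p.fst
  have hφ : Measurable φ := measurable_modulation a
  have hwφ (j : ℕ) : Measurable fun p ↦ w j (φ p) := (hw.measurable j).comp hφ
  have piece_integrable :=
    integrable_smul_of_hasSum hwφ (fun j _ ↦ hw.nonneg j _) (fun _ ↦ hw.hasSum _) hg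
  have piece_two_le (j : ℕ) := eLpNorm_two_smul_le (fun p ↦ hw.nonneg j (φ p))
    (fun p ↦ hw.le_one j (φ p)) (hw.integrable_mul_norm_sq hφ hg₂ j)
  have sqrt_scale (j : ℕ) : ENNReal.ofReal (2 * 2 ^ j) ^ (1 / 2 : ℝ) =
      ↑((2 : ℝ≥0) ^ (1 / 2 : ℝ)) * ENNReal.ofReal (2 ^ ((j : ℝ) * (1 / 2))) := by
    rw [Real.rpow_mul zero_le_two, Real.rpow_natCast, ← ENNReal.ofReal_rpow_of_pos (by positivity),
      ENNReal.ofReal_mul zero_le_two, ENNReal.mul_rpow_of_nonneg _ _ one_half_pos.le,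
      ENNReal.coe_rpow_of_nonneg _ one_half_pos.le, ENNReal.ofReal_ofNat, ENNReal.coe_ofNat]
  have piece_le (j : ℕ) : eLpNorm (𝓕 fun p ↦ w j (φ p) • g p) (ENNReal.ofReal (2 * (3 + a))) ≤
      ↑(C * 2 ^ (1 / 2 : ℝ)) * ENNReal.ofReal (dyadicTerm volume w φ g j) := by
    grw [hC (M := 2 * 2 ^ j) (by positivity) (piece_integrable j)
      ⟨(piece_integrable j).1, (piece_two_le j).trans_lt ENNReal.ofReal_lt_top⟩
      ((hwφ j).smul hgm) fun p hp ↦ hw.abs_le (left_ne_zero_of_smul hp), piece_two_le j]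
    rw [sqrt_scale, dyadicTerm, ENNReal.ofReal_mul (by positivity), ENNReal.coe_mul]
    exact le_of_eq (by ring)
  exact (eLpNorm_fourier_le_tsum_smul hwφ (fun j _ ↦ hw.nonneg j _) (fun _ ↦ hw.hasSum _) hg
    (ENNReal.one_le_ofReal.2 (by linarith))).trans
      ((ENNReal.tsum_le_tsum piece_le).trans_eq ENNReal.tsum_mul_left)

end IsDyadicPartition

end Summation

section SpaceTime

theorem abs_disp_le {a : ℝ} (ha : 0 ≤ a) (ξ : ℝ) : |disp a ξ| ≤ (1 + |ξ|) ^ (⌈a⌉₊ + 2) := by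
  calc |disp a ξ| = |ξ| * |ξ| ^ (1 + a) := by
        rw [disp, abs_mul, abs_of_nonneg (Real.rpow_nonneg (abs_nonneg ξ) _)]
    _ ≤ (1 + |ξ|) * (1 + |ξ|) ^ (1 + a) := by gcongr <;> linarith
    _ ≤ (1 + |ξ|) * (1 + |ξ|) ^ ((⌈a⌉₊ + 1 : ℕ) : ℝ) := by
        gcongr
        · linarith [abs_nonneg ξ]
        · push_cast
          linarith [Nat.le_ceil a]
    _ = (1 + |ξ|) ^ (⌈a⌉₊ + 2) := by rw [Real.rpow_natCast]; ring

theorem one_add_abs_snd_sub_disp_fst_le {a : ℝ} (ha : 0 ≤ a) (p : Plane) :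
    1 + |p.snd - disp a p.fst| ≤ 2 * (2 * (1 + ‖p‖ ^ 2)) ^ (⌈a⌉₊ + 2) := by
  have one_add_norm_le : 1 + ‖p‖ ≤ 2 * (1 + ‖p‖ ^ 2) := by nlinarith [sq_nonneg (‖p‖ - 1)]
  have fst_le : |p.fst| ≤ ‖p‖ := WithLp.norm_fst_le _ p
  have snd_le : |p.snd| ≤ ‖p‖ := WithLp.norm_snd_le _ p
  have disp_le : |disp a p.fst| ≤ (2 * (1 + ‖p‖ ^ 2)) ^ (⌈a⌉₊ + 2) := by
    grw [abs_disp_le ha, fst_le, one_add_norm_le]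
  have le_pow : 2 * (1 + ‖p‖ ^ 2) ≤ (2 * (1 + ‖p‖ ^ 2)) ^ (⌈a⌉₊ + 2) :=
    le_self_pow₀ (by nlinarith [sq_nonneg ‖p‖]) (by omega)
  linarith [abs_sub p.snd (disp a p.fst)]

theorem integrable_sq_mul_norm_sq_of_hasTemperateGrowth {V E : Type*} [NormedAddCommGroup V]
    [NormedSpace ℝ V] [MeasurableSpace V] [BorelSpace V] [SecondCountableTopology V]
    {μ : Measure V} [μ.HasTemperateGrowth] [NormedAddCommGroup E] [NormedSpace ℝ E]
    {m φ : V → ℝ} (hm : AEStronglyMeasurable m μ) (hφ : φ.HasTemperateGrowth)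
    (hmφ : ∀ v, |m v| ≤ φ v) (g : 𝓢(V, E)) : Integrable (fun v ↦ m v ^ 2 * ‖g v‖ ^ 2) μ := by
  refine (((SchwartzMap.smulLeftCLM E φ g).memLp 2 μ).integrable_norm_pow two_ne_zero).mono'
    ((hm.pow 2).mul (g.continuous.norm.pow 2).aestronglyMeasurable) (.of_forall fun v ↦ ?_)
  have sq_le : m v ^ 2 ≤ φ v ^ 2 := sq_le_sq.2 ((hmφ v).trans (le_abs_self _))
  rw [SchwartzMap.smulLeftCLM_apply_apply hφ, norm_smul, mul_pow, Real.norm_eq_abs (φ v), sq_abs,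
    Real.norm_of_nonneg (by positivity)]
  gcongr

theorem integrable_one_add_abs_modulation_sq_mul_norm_sq {a : ℝ} (ha : 0 ≤ a) (g : 𝓢(Plane, ℂ)) :
    Integrable fun p ↦ (1 + |p.snd - disp a p.fst|) ^ 2 * ‖g p‖ ^ 2 := by
  refine integrable_sq_mul_norm_sq_of_hasTemperateGrowth
    (φ := fun p ↦ 2 * (2 * (1 + ‖p‖ ^ 2)) ^ (⌈a⌉₊ + 2)) ?_ ?_ (fun p ↦ ?_) g
  · exact ((measurable_modulation a).abs.const_add 1).aestronglyMeasurable
  · fun_prop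
  · rw [abs_of_nonneg (by positivity)]
    exact one_add_abs_snd_sub_disp_fst_le ha p

/-- The Schwartz function `p ↦ f (2π p)` on the Euclidean plane. The dilation by `2π` passes from
the frequency `e ^ (i x ξ)` of `FT2` to the frequency `e ^ (2 π i x ξ)` of the Fourier transform of
inner product spaces. -/
def dilatePlane (f : 𝓢(ℝ × ℝ, ℂ)) : 𝓢(Plane, ℂ) :=
  SchwartzMap.compCLMOfContinuousLinearEquiv ℂ
    ((WithLp.prodContinuousLinearEquiv 2 ℝ ℝ ℝ).trans
      (ContinuousLinearEquiv.smulLeft (Units.mk0 (2 * Real.pi) Real.two_pi_pos.ne'))) f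

theorem dilatePlane_apply (f : 𝓢(ℝ × ℝ, ℂ)) (p : Plane) :
    dilatePlane f p = f ((2 * Real.pi) • WithLp.ofLp p) :=
  rfl

theorem integral_plane {E : Type*} [NormedAddCommGroup E] [NormedSpace ℝ E] (H : Plane → E) :
    ∫ p, H p = ∫ p : ℝ × ℝ, H (WithLp.toLp 2 p) :=
  ((WithLp.volume_preserving_toLp ℝ ℝ).integral_comp
    (MeasurableEquiv.toLp 2 (ℝ × ℝ)).measurableEmbedding H).symm

/-- The space-time Fourier transform as a Schwartz function on the Euclidean plane. -/
def planeFourier (f : 𝓢(ℝ × ℝ, ℂ)) : 𝓢(Plane, ℂ) :=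
  (2 * Real.pi) ^ 2 • 𝓕⁻ (dilatePlane f)

theorem planeFourier_apply (f : 𝓢(ℝ × ℝ, ℂ)) (p : Plane) :
    planeFourier f p = FT2 f p.fst p.snd := by
  set H : ℝ × ℝ → ℂ := fun q ↦ cexp (I * ((q.1 * p.fst + q.2 * p.snd : ℝ) : ℂ)) * f q
  have fourierInv_eq : 𝓕⁻ (dilatePlane f) p = ∫ q : ℝ × ℝ, H ((2 * Real.pi) • q) := by
    rw [SchwartzMap.fourierInv_coe, Real.fourierInv_eq', integral_plane]
    refine integral_congr_ae (.of_forall fun q ↦ ?_)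
    dsimp only [H]
    rw [dilatePlane_apply, WithLp.prod_inner_apply, smul_eq_mul]
    congr 2
    simp
    ring
  calc planeFourier f p = (2 * Real.pi) ^ 2 • 𝓕⁻ (dilatePlane f) p := rfl
    _ = FT2 f p.fst p.snd := by
        rw [fourierInv_eq, Measure.integral_comp_smul, show Module.finrank ℝ (ℝ × ℝ) = 2 by simp,
          abs_of_pos (by positivity), smul_inv_smul₀ (by positivity)]
        rfl

theorem fourier_planeFourier_apply (f : 𝓢(ℝ × ℝ, ℂ)) (p : Plane) :
    𝓕 (⇑(planeFourier f)) p = (2 * Real.pi) ^ 2 • f ((2 * Real.pi) • WithLp.ofLp p) := by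
  rw [← SchwartzMap.fourier_coe, planeFourier, FourierTransform.fourier_smul,
    FourierTransform.fourier_fourierInv_eq]
  rfl

theorem Lpnorm_le_Lpnorm_fourier_planeFourier (f : 𝓢(ℝ × ℝ, ℂ)) {q : ℝ} (hq : 1 ≤ q) :
    Lpnorm q f ≤ Lpnorm q (𝓕 (⇑(planeFourier f))) := by
  have scale_le : (2 * Real.pi) ^ 2 ≤ ((2 * Real.pi) ^ 2) ^ q :=
    Real.self_le_rpow_of_one_le (one_le_pow₀ (by linarith [Real.two_le_pi])) hq
  refine Real.rpow_le_rpow (integral_nonneg fun y ↦ by positivity) ?_ (by positivity)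
  calc ∫ y, ‖f y‖ ^ q
      = (2 * Real.pi) ^ 2 * ∫ z : ℝ × ℝ, ‖f ((2 * Real.pi) • z)‖ ^ q := by
        rw [Measure.integral_comp_smul volume fun y ↦ ‖f y‖ ^ q,
          show Module.finrank ℝ (ℝ × ℝ) = 2 by simp, abs_of_pos (by positivity), smul_eq_mul,
          mul_inv_cancel_left₀ (by positivity)]
    _ ≤ ((2 * Real.pi) ^ 2) ^ q * ∫ z : ℝ × ℝ, ‖f ((2 * Real.pi) • z)‖ ^ q := by
        gcongr
    _ = ∫ p, ‖𝓕 (⇑(planeFourier f)) p‖ ^ q := by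
        simp only [integral_plane, fourier_planeFourier_apply, norm_smul,
          Real.norm_of_nonneg (sq_nonneg (2 * Real.pi)),
          Real.mul_rpow (sq_nonneg (2 * Real.pi)) (norm_nonneg _), integral_const_mul]

theorem ofReal_Lpnorm {X E : Type*} [MeasureSpace X] [NormedAddCommGroup E] {f : X → E} {q : ℝ}
    (hq : 0 < q) (hf : MemLp f (ENNReal.ofReal q)) :
    ENNReal.ofReal (Lpnorm q f) = eLpNorm f (ENNReal.ofReal q) := by
  rw [hf.eLpNorm_eq_integral_rpow_norm (by simpa using hq) ENNReal.ofReal_ne_top,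
    ENNReal.toReal_ofReal hq.le, Lpnorm, one_div]

theorem Xnorm_half_zero_eq_tsum (a : ℝ) (χ₀ χ : ℝ → ℝ) (f : 𝓢(ℝ × ℝ, ℂ)) :
    Xnorm a χ₀ χ (1 / 2) 0 f = ∑' j, dyadicTerm volume (chiJ χ₀ χ)
      (fun p : Plane ↦ p.snd - disp a p.fst) (planeFourier f) j := by
  simp [Xnorm, dyadicTerm, integral_plane, planeFourier_apply]

end SpaceTime

theorem chiJ_of_ne_zero {χ₀ χ : ℝ → ℝ} {j : ℕ} (hj : j ≠ 0) (z : ℝ) :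
    chiJ χ₀ χ j z = χ (z / 2 ^ j) := by
  rw [chiJ, if_neg hj, Real.rpow_neg zero_le_two, Real.rpow_natCast, inv_mul_eq_div]

theorem DyadicCutoffs.isDyadicPartition {χ₀ χ : ℝ → ℝ} (hχ : DyadicCutoffs χ₀ χ) :
    IsDyadicPartition (chiJ χ₀ χ) where
  measurable j := by
    have := hχ.smooth0.continuous.measurable
    have := hχ.smooth1.continuous.measurable
    unfold chiJ
    split_ifs <;> fun_prop
  nonneg j z := by
    unfold chiJ
    split_ifs
    exacts [(hχ.mem0 _).1, (hχ.mem1 _).1]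
  hasSum z := by
    have summable : Summable fun j ↦ chiJ χ₀ χ j z := by
      by_contra h
      simpa [tsum_eq_zero_of_not_summable h] using hχ.partition z
    exact hχ.partition z ▸ summable.hasSum
  abs_le {j z} h := by
    rcases eq_or_ne j 0 with rfl | hj
    · simpa using not_lt.1 (mt (hχ.supp0 z) h)
    · rw [chiJ_of_ne_zero hj] at h
      have abs_lt := (hχ.supp1 _ h).2
      rw [abs_div, abs_of_pos (a := (2 : ℝ) ^ j) (by positivity), div_lt_iff₀ (by positivity)]
        at abs_lt
      exact abs_lt.le
  le_abs {j z} h := by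
    rcases eq_or_ne j 0 with rfl | hj
    · linarith [abs_nonneg z, pow_zero (2 : ℝ)]
    · rw [chiJ_of_ne_zero hj] at h
      have lt_abs := (hχ.supp1 _ h).1
      rw [abs_div, abs_of_pos (a := (2 : ℝ) ^ j) (by positivity), lt_div_iff₀ (by positivity)]
        at lt_abs
      linarith

theorem statement3_general {a : ℝ} (ha : 0 ≤ a) {χ₀ χ : ℝ → ℝ}
    (hχ : IsDyadicPartition (chiJ χ₀ χ)) :
    ∃ C > 0, ∀ f : 𝓢(ℝ × ℝ, ℂ),
      Lpnorm (2 * (3 + a)) f ≤ C * Xnorm a χ₀ χ (1 / 2) 0 f := by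
  obtain ⟨C, hC⟩ := hχ.exists_eLpNorm_fourier_le_tsum ha
  refine ⟨C + 1, by positivity, fun f ↦ ?_⟩
  set g := planeFourier f
  have term_nonneg := hχ.dyadicTerm_nonneg (μ := volume)
    (φ := fun p : Plane ↦ p.snd - disp a p.fst) (g := g)
  have term_summable :=
    hχ.summable_dyadicTerm (integrable_one_add_abs_modulation_sq_mul_norm_sq ha g)
  have hXnorm := Xnorm_half_zero_eq_tsum a χ₀ χ f
  have Xnorm_nonneg : 0 ≤ Xnorm a χ₀ χ (1 / 2) 0 f := hXnorm ▸ tsum_nonneg term_nonneg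
  have ofReal_le : ENNReal.ofReal (Lpnorm (2 * (3 + a)) (𝓕 (⇑g))) ≤
      ENNReal.ofReal (C * Xnorm a χ₀ χ (1 / 2) 0 f) := by
    rw [ofReal_Lpnorm (by positivity) (SchwartzMap.fourier_coe g ▸ (𝓕 g).memLp _),
      ENNReal.ofReal_mul C.coe_nonneg, ENNReal.ofReal_coe_nnreal, hXnorm,
      ENNReal.ofReal_tsum_of_nonneg term_nonneg term_summable]
    exact hC g.continuous.measurable g.integrable (g.memLp 2)
  calc Lpnorm (2 * (3 + a)) f ≤ Lpnorm (2 * (3 + a)) (𝓕 (⇑g)) :=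
        Lpnorm_le_Lpnorm_fourier_planeFourier f (by linarith)
    _ ≤ C * Xnorm a χ₀ χ (1 / 2) 0 f :=
        (ENNReal.ofReal_le_ofReal_iff (by positivity)).1 ofReal_le
    _ ≤ (C + 1) * Xnorm a χ₀ χ (1 / 2) 0 f := by gcongr; linarith

theorem statement3 (a : ℝ) (ha : a ∈ Set.Icc (0 : ℝ) 1)
    (χ₀ χ : ℝ → ℝ) (hχ : DyadicCutoffs χ₀ χ) :
    ∃ C > 0, ∀ f : SchwartzMap (ℝ × ℝ) ℂ,
      Lpnorm (2 * (3 + a)) (fun p : ℝ × ℝ => f p) ≤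
        C * Xnorm a χ₀ χ (1 / 2) 0 (fun p => f p) :=
  statement3_general ha.1 hχ.isDyadicPartition
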